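/- arXiv:2308.01289 — 6 statements merged into one kernel-verified Lean document; each statement's English description precedes it below -/
import Mathlib

section
/- For every integer n ≥ 1 and all reals r > 0, k > 0, the three-dimensional inverse Fourier transform of ĝ_n satisfies (1/(2π²r)) Σ_{j=0}^{n−1} (2k²)^j ∫_0^∞ p sin(pr)/(p² + k²)^{j+1} dp = (1/(4π)) (e^{−kr}/r) (1 + Σ_{j=1}^{n−1} (1/(2^{j−1} j!)) Σ_{m=0}^{j−1} ((2j−m−2)! 2^m)/(m! (j−m−1)!) (kr)^{m+1}), where the j = 0 integral is understood as the improper Riemann integral lim_{R→∞} ∫_0^R p sin(pr)/(p² + k²) dp. -/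
open Real Filter MeasureTheory intervalIntegral

/-- The non-oscillatory component `g_n(r,k)` of the 3D Helmholtz Green's function:
`g_n(r,k) = (1/(4π)) (e^{-kr}/r) (1 + ∑_{j=1}^{n-1} (1/(2^{j-1} j!))
  ∑_{m=0}^{j-1} ((2j-m-2)! 2^m)/(m! (j-m-1)!) (kr)^{m+1})`. -/
noncomputable def helmholtzG3 (n : ℕ) (r k : ℝ) : ℝ :=
  (1 / (4 * Real.pi)) * (Real.exp (-(k * r)) / r) *
    (1 + ∑ j ∈ Finset.Ico 1 n,
      (1 / (2 ^ (j - 1) * (Nat.factorial j : ℝ))) *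
        ∑ m ∈ Finset.range j,
          ((Nat.factorial (2 * j - m - 2) : ℝ) * 2 ^ m) /
              ((Nat.factorial m : ℝ) * (Nat.factorial (j - m - 1) : ℝ)) *
            (k * r) ^ (m + 1))


noncomputable def hhC (r k : ℝ) (j : ℕ) (R : ℝ) : ℝ :=
  ∫ p in (0 : ℝ)..R, Real.cos (p * r) / (p ^ 2 + k ^ 2) ^ j

noncomputable def hhS (r k : ℝ) (j : ℕ) (R : ℝ) : ℝ :=
  ∫ p in (0 : ℝ)..R, p * Real.sin (p * r) / (p ^ 2 + k ^ 2) ^ j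

noncomputable def hhbeta (i m : ℕ) : ℝ :=
  ((Nat.factorial (2 * i - m) : ℝ) * 2 ^ m) /
    ((Nat.factorial m : ℝ) * (Nat.factorial (i - m) : ℝ))

noncomputable def hhb (x : ℝ) (i : ℕ) : ℝ := ∑ m ∈ Finset.range (i + 1), hhbeta i m * x ^ m

lemma hhb_rec (x : ℝ) (i : ℕ) :
    hhb x (i + 2) = 2 * (2 * i + 3) * hhb x (i + 1) + 4 * x ^ 2 * hhb x i := by
  have e0 : hhbeta (i + 2) 0 = 2 * (2 * i + 3) * hhbeta (i + 1) 0 := by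
    unfold hhbeta
    rw [show 2 * (i + 2) - 0 = 2 * i + 2 + 1 + 1 by omega,
      show 2 * (i + 1) - 0 = 2 * i + 2 by omega]
    simp only [Nat.sub_zero, Nat.factorial_succ (2 * i + 2 + 1), Nat.factorial_succ (2 * i + 2),
      Nat.factorial_succ (i + 1)]
    push_cast
    field_simp
    ring
  have e1 : hhbeta (i + 2) 1 = 2 * (2 * i + 3) * hhbeta (i + 1) 1 := by
    unfold hhbeta
    rw [show 2 * (i + 2) - 1 = 2 * i + 1 + 1 + 1 by omega,
      show 2 * (i + 1) - 1 = 2 * i + 1 by omega, show i + 2 - 1 = i + 1 by omega,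
      show i + 1 - 1 = i by omega]
    simp only [Nat.factorial_succ (2 * i + 1 + 1), Nat.factorial_succ (2 * i + 1),
      Nat.factorial_succ i]
    push_cast
    field_simp
    ring
  have e2 : ∀ m < i, hhbeta (i + 2) (m + 2) =
      2 * (2 * i + 3) * hhbeta (i + 1) (m + 2) + 4 * hhbeta i m := by
    intro m hm
    obtain ⟨d, rfl⟩ := Nat.exists_eq_add_of_lt hm
    unfold hhbeta
    rw [show 2 * (m + d + 1 + 2) - (m + 2) = m + 2 * d + 2 + 1 + 1 by omega,
      show 2 * (m + d + 1 + 1) - (m + 2) = m + 2 * d + 2 by omega,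
      show 2 * (m + d + 1) - m = m + 2 * d + 2 by omega,
      show m + d + 1 + 2 - (m + 2) = d + 1 by omega,
      show m + d + 1 + 1 - (m + 2) = d by omega,
      show m + d + 1 - m = d + 1 by omega]
    simp only [Nat.factorial_succ (m + 2 * d + 2 + 1), Nat.factorial_succ (m + 2 * d + 2),
      Nat.factorial_succ (m + 1), Nat.factorial_succ m, Nat.factorial_succ d]
    push_cast
    field_simp
    ring
  have e3 : hhbeta (i + 2) (i + 2) = 4 * hhbeta i i := by
    unfold hhbeta
    rw [show 2 * (i + 2) - (i + 2) = i + 2 by omega, show 2 * i - i = i by omega,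
      Nat.sub_self, Nat.sub_self]
    field_simp
    ring
  unfold hhb
  have A : ∀ f : ℕ → ℝ, ∑ m ∈ Finset.range (i + 2 + 1), f m =
      (∑ m ∈ Finset.range i, f (m + 2)) + f (i + 2) + f 1 + f 0 := by
    intro f
    rw [Finset.sum_range_succ' _ (i + 2), Finset.sum_range_succ' _ (i + 1),
      Finset.sum_range_succ _ i]
  have B : ∀ f : ℕ → ℝ, ∑ m ∈ Finset.range (i + 1 + 1), f m =
      (∑ m ∈ Finset.range i, f (m + 2)) + f 1 + f 0 := by
    intro f
    rw [Finset.sum_range_succ' _ (i + 1), Finset.sum_range_succ' _ i]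
  rw [A, B, Finset.sum_range_succ _ i, e0, e1, e3,
    Finset.sum_congr rfl (fun m hm => by rw [e2 m (Finset.mem_range.mp hm)])]
  have D : ∑ m ∈ Finset.range i,
      (2 * (2 * (i : ℝ) + 3) * hhbeta (i + 1) (m + 2) + 4 * hhbeta i m) * x ^ (m + 2) =
      2 * (2 * (i : ℝ) + 3) * (∑ m ∈ Finset.range i, hhbeta (i + 1) (m + 2) * x ^ (m + 2))
      + 4 * x ^ 2 * ∑ m ∈ Finset.range i, hhbeta i m * x ^ m := by
    rw [Finset.mul_sum, Finset.mul_sum, ← Finset.sum_add_distrib]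
    refine Finset.sum_congr rfl (fun m _ => ?_)
    ring
  rw [D]
  ring

/-- normalised coefficient -/
noncomputable def hha (x : ℝ) : ℕ → ℝ
  | 0 => 1
  | i + 1 => x / (2 ^ i * (Nat.factorial (i + 1) : ℝ)) * hhb x i

lemma hha_one (x : ℝ) : hha x 1 = x := by
  simp [hha, hhb, hhbeta]

lemma hha_rec (x : ℝ) (j : ℕ) :
    (j + 2) * hha x (j + 2) = (2 * j + 1) * hha x (j + 1) + x ^ 2 / (j + 1) * hha x j := by
  cases j with
  | zero => simp [hha, hhb, hhbeta, Finset.sum_range_succ]; field_simp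
  | succ i =>
    simp only [hha]
    rw [hhb_rec]
    simp only [Nat.factorial_succ]
    push_cast
    field_simp
    ring

lemma hhcont {k : ℝ} (hk : 0 < k) (j : ℕ) {f : ℝ → ℝ} (hf : Continuous f) :
    Continuous (fun p : ℝ => f p / (p ^ 2 + k ^ 2) ^ j) := by
  refine hf.div (by fun_prop) (fun p => ?_)
  positivity

lemma hh_bd {k : ℝ} (hk : 0 < k) (j : ℕ) :
    Tendsto (fun R : ℝ => R / (R ^ 2 + k ^ 2) ^ (j + 1)) atTop (nhds 0) := by
  have h1 : Tendsto (fun R : ℝ => (1 / k ^ 2) ^ j * R⁻¹) atTop (nhds 0) := by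
    have := tendsto_inv_atTop_zero.const_mul ((1 / k ^ 2 : ℝ) ^ j)
    rwa [mul_zero] at this
  refine squeeze_zero' ?_ ?_ h1
  · filter_upwards [eventually_gt_atTop 0] with R hR
    positivity
  · filter_upwards [eventually_gt_atTop 0] with R hR
    have : R / (R ^ 2 + k ^ 2) ^ (j + 1) = (1 / (R ^ 2 + k ^ 2)) ^ j * (R / (R ^ 2 + k ^ 2)) := by
      rw [one_div_pow, pow_succ]
      field_simp
    rw [this]
    gcongr
    · nlinarith
    · rw [div_le_iff₀ (by positivity)]
      have : R⁻¹ * (R ^ 2 + k ^ 2) = R + R⁻¹ * k ^ 2 := by field_simp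
      rw [this]
      have : 0 < R⁻¹ * k ^ 2 := by positivity
      linarith

lemma hh_M {r k : ℝ} (hk : 0 < k) (j : ℕ) :
    Tendsto (fun R => r * hhC r k (j + 1) R - 2 * (j + 1) * hhS r k (j + 2) R) atTop (nhds 0) := by
  have h : ∀ R, r * hhC r k (j + 1) R - 2 * (j + 1) * hhS r k (j + 2) R
      = Real.sin (R * r) / (R ^ 2 + k ^ 2) ^ (j + 1) := by
    intro R
    unfold hhC hhS
    rw [← intervalIntegral.integral_const_mul, ← intervalIntegral.integral_const_mul,
      ← intervalIntegral.integral_sub]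
    rotate_left
    · exact ((hhcont hk _ (by fun_prop)).const_mul _).intervalIntegrable _ _
    · exact ((hhcont hk _ (by fun_prop)).const_mul _).intervalIntegrable _ _
    rw [integral_eq_sub_of_hasDerivAt (f := fun p => Real.sin (p * r) / (p ^ 2 + k ^ 2) ^ (j + 1))]
    · simp
    · intro p _
      have hD : p ^ 2 + k ^ 2 ≠ 0 := by positivity
      have h1 : HasDerivAt (fun p : ℝ => Real.sin (p * r)) (Real.cos (p * r) * r) p := by
        simpa using ((hasDerivAt_id p).mul_const r).sin
      have h2 : HasDerivAt (fun p : ℝ => (p ^ 2 + k ^ 2) ^ (j + 1))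
          ((j + 1) * (p ^ 2 + k ^ 2) ^ j * (2 * p)) p := by
        simpa using ((hasDerivAt_pow 2 p).add_const (k ^ 2)).fun_pow (j + 1)
      refine (h1.fun_div h2 (by positivity)).congr_deriv ?_
      field_simp
      try ring
    · exact (((hhcont hk _ (by fun_prop)).const_mul _).sub
        ((hhcont hk _ (by fun_prop)).const_mul _)).intervalIntegrable _ _
  simp_rw [h]
  refine squeeze_zero_norm' ?_ (hh_bd hk j)
  filter_upwards [eventually_ge_atTop 1] with R hR
  rw [norm_div, Real.norm_eq_abs, Real.norm_eq_abs,
    abs_of_nonneg (by positivity : 0 ≤ (R ^ 2 + k ^ 2) ^ (j + 1))]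
  gcongr
  exact (abs_sin_le_one _).trans hR

lemma hh_L {r k : ℝ} (hk : 0 < k) (j : ℕ) :
    Tendsto (fun R => -(2 * j + 1) * hhC r k (j + 1) R - r * hhS r k (j + 1) R
      + 2 * (j + 1) * k ^ 2 * hhC r k (j + 2) R) atTop (nhds 0) := by
  have h : ∀ R, -(2 * j + 1) * hhC r k (j + 1) R - r * hhS r k (j + 1) R
      + 2 * (j + 1) * k ^ 2 * hhC r k (j + 2) R
      = R * Real.cos (R * r) / (R ^ 2 + k ^ 2) ^ (j + 1) := by
    intro R
    unfold hhC hhS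
    rw [← intervalIntegral.integral_const_mul, ← intervalIntegral.integral_const_mul,
      ← intervalIntegral.integral_const_mul,
      ← intervalIntegral.integral_sub, ← intervalIntegral.integral_add]
    rotate_left
    · exact (((hhcont hk _ (by fun_prop)).const_mul _).sub
        ((hhcont hk _ (by fun_prop)).const_mul _)).intervalIntegrable _ _
    · exact ((hhcont hk _ (by fun_prop)).const_mul _).intervalIntegrable _ _
    · exact ((hhcont hk _ (by fun_prop)).const_mul _).intervalIntegrable _ _
    · exact ((hhcont hk _ (by fun_prop)).const_mul _).intervalIntegrable _ _
    rw [integral_eq_sub_of_hasDerivAt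
      (f := fun p => p * Real.cos (p * r) / (p ^ 2 + k ^ 2) ^ (j + 1))]
    · simp
    · intro p _
      have hD : p ^ 2 + k ^ 2 ≠ 0 := by positivity
      have h1 : HasDerivAt (fun p : ℝ => p * Real.cos (p * r))
          (Real.cos (p * r) - p * (Real.sin (p * r) * r)) p := by
        simpa [sub_eq_add_neg] using (hasDerivAt_id' p).fun_mul ((hasDerivAt_id p).mul_const r).cos
      have h2 : HasDerivAt (fun p : ℝ => (p ^ 2 + k ^ 2) ^ (j + 1))
          ((j + 1) * (p ^ 2 + k ^ 2) ^ j * (2 * p)) p := by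
        simpa using ((hasDerivAt_pow 2 p).add_const (k ^ 2)).fun_pow (j + 1)
      refine (h1.fun_div h2 (by positivity)).congr_deriv ?_
      field_simp
      ring
    · exact ((((hhcont hk _ (by fun_prop)).const_mul _).sub
        ((hhcont hk _ (by fun_prop)).const_mul _)).add
        ((hhcont hk _ (by fun_prop)).const_mul _)).intervalIntegrable _ _
  simp_rw [h]
  refine squeeze_zero_norm' ?_ (hh_bd hk j)
  filter_upwards [eventually_ge_atTop 1] with R hR
  rw [norm_div, Real.norm_eq_abs, Real.norm_eq_abs, abs_mul, abs_of_nonneg (by linarith : 0 ≤ R),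
    abs_of_nonneg (by positivity : 0 ≤ (R ^ 2 + k ^ 2) ^ (j + 1))]
  gcongr
  exact mul_le_of_le_one_right (by linarith) (abs_cos_le_one _)

lemma hh_half {z : ℂ} {b : ℝ} (hz : 0 < z.re)
    (hinteg : IntegrableOn (fun x : ℝ => (1 + b * x : ℂ) * Complex.exp (-z * x)) (Set.Ioi 0)) :
    ∫ x : ℝ in Set.Ioi 0, (1 + b * x : ℂ) * Complex.exp (-z * x) = 1 / z + b / z ^ 2 := by
  have hz0 : z ≠ 0 := by
    rintro rfl
    simp at hz
  have hd : ∀ x : ℝ, HasDerivAt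
      (fun x : ℝ => -((1 / z + b / z ^ 2) + b / z * x) * Complex.exp (-z * x))
      ((1 + b * x : ℂ) * Complex.exp (-z * x)) x := by
    intro x
    have h0 : HasDerivAt (fun x : ℝ => (x : ℂ)) 1 x := Complex.ofRealCLM.hasDerivAt
    have h1 := ((h0.const_mul (b / z : ℂ)).const_add (1 / z + b / z ^ 2 : ℂ)).fun_neg
    have h2 := (h0.const_mul (-z)).cexp
    refine (h1.fun_mul h2).congr_deriv ?_
    field_simp
    ring
  have h0 : Tendsto (fun x : ℝ => Real.exp (-(z.re * x))) atTop (nhds 0) := by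
    simpa [Function.comp_def] using (tendsto_pow_mul_exp_neg_atTop_nhds_zero 0).comp
      (tendsto_id.const_mul_atTop hz)
  have h1 : Tendsto (fun x : ℝ => x * Real.exp (-(z.re * x))) atTop (nhds 0) := by
    have := ((tendsto_pow_mul_exp_neg_atTop_nhds_zero 1).comp
      (tendsto_id.const_mul_atTop hz)).const_mul (z.re)⁻¹
    rw [mul_zero] at this
    refine this.congr (fun x => ?_)
    simp
    field_simp
  have ht : Tendsto (fun x : ℝ => -((1 / z + b / z ^ 2) + b / z * x) * Complex.exp (-z * x))
      atTop (nhds 0) := by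
    have h2 := (h0.const_mul ‖(1 / z + b / z ^ 2 : ℂ)‖).add (h1.const_mul ‖(b / z : ℂ)‖)
    simp only [mul_zero, add_zero] at h2
    refine squeeze_zero_norm' ?_ h2
    filter_upwards [eventually_ge_atTop 0] with x hx
    rw [norm_mul, norm_neg, Complex.norm_exp]
    have : (-z * (x : ℂ)).re = -(z.re * x) := by simp
    rw [this]
    have h3 := norm_add_le (1 / z + b / z ^ 2 : ℂ) (b / z * x)
    rw [norm_mul (b / z : ℂ), Complex.norm_real, Real.norm_eq_abs, abs_of_nonneg hx] at h3
    calc _ ≤ _ := mul_le_mul_of_nonneg_right h3 (Real.exp_pos _).le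
      _ = _ := by ring
  rw [integral_Ioi_of_hasDerivAt_of_tendsto (hd 0).continuousAt.continuousWithinAt
    (fun x _ => hd x) hinteg ht]
  simp

noncomputable def hhf (k c v : ℝ) : ℝ := (1 + c * (k * |v|)) * Real.exp (-(k * |v|))

noncomputable def hhA (k c w : ℝ) : ℝ :=
  2 * k / (w ^ 2 + k ^ 2) + 2 * k * c * (k ^ 2 - w ^ 2) / (w ^ 2 + k ^ 2) ^ 2

lemma hhf_cont (k c : ℝ) : Continuous (hhf k c) := by
  unfold hhf
  fun_prop

lemma hhf_int {k c : ℝ} (hk : 0 < k) (hc : 0 ≤ c) (hc1 : c ≤ 1) : Integrable (hhf k c) := by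
  have h1 := (integrable_inv_one_add_sq.comp_mul_left' hk.ne').const_mul 6
  refine h1.mono' (hhf_cont k c).aestronglyMeasurable (ae_of_all _ fun v => ?_)
  unfold hhf
  have hy : 0 ≤ k * |v| := by positivity
  have hsq : (k * v) ^ 2 = (k * |v|) ^ 2 := by rw [mul_pow, mul_pow, sq_abs]
  rw [hsq]
  generalize k * |v| = y at hy
  rw [Real.norm_eq_abs, abs_of_nonneg (by positivity), Real.exp_neg, ← div_eq_mul_inv,
    ← div_eq_mul_inv, div_le_div_iff₀ (by positivity) (by positivity)]
  have h := Real.sum_le_exp_of_nonneg hy 4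
  simp [Finset.sum_range_succ, Nat.factorial] at h
  have h2 : c * y ≤ y := by nlinarith
  have h3 : (1 + c * y) * (1 + y ^ 2) ≤ (1 + y) * (1 + y ^ 2) := by gcongr
  nlinarith [pow_nonneg hy 2, pow_nonneg hy 3]

lemma hhA_cont {k : ℝ} (c : ℝ) (hk : 0 < k) : Continuous (hhA k c) := by
  unfold hhA
  refine Continuous.add ?_ ?_
  · exact Continuous.div (by fun_prop) (by fun_prop) (fun w => by positivity)
  · exact Continuous.div (by fun_prop) (by fun_prop) (fun w => by positivity)

lemma hhA_int {k c : ℝ} (hk : 0 < k) (hc : 0 ≤ c) (hc1 : c ≤ 1) : Integrable (hhA k c) := by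
  have h1 := (integrable_inv_one_add_sq.comp_mul_left' (inv_pos.mpr hk).ne').const_mul (4 / k)
  refine h1.mono' (hhA_cont c hk).aestronglyMeasurable (ae_of_all _ fun w => ?_)
  unfold hhA
  have e1 : 4 / k * (1 + (k⁻¹ * w) ^ 2)⁻¹ = 4 * k / (w ^ 2 + k ^ 2) := by
    field_simp
    ring
  rw [e1]
  have hq : |(k ^ 2 - w ^ 2)| ≤ w ^ 2 + k ^ 2 := by
    rw [abs_le]
    constructor <;> nlinarith [sq_nonneg k, sq_nonneg w]
  have hD : 0 < w ^ 2 + k ^ 2 := by positivity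
  have e2 : ‖2 * k * c * (k ^ 2 - w ^ 2) / (w ^ 2 + k ^ 2) ^ 2‖ ≤ 2 * k / (w ^ 2 + k ^ 2) := by
    rw [norm_div, norm_mul, Real.norm_eq_abs, Real.norm_eq_abs, Real.norm_eq_abs,
      abs_of_nonneg (by positivity : 0 ≤ 2 * k * c),
      abs_of_nonneg (by positivity : 0 ≤ (w ^ 2 + k ^ 2) ^ 2)]
    calc 2 * k * c * |k ^ 2 - w ^ 2| / (w ^ 2 + k ^ 2) ^ 2
        ≤ 2 * k * 1 * (w ^ 2 + k ^ 2) / (w ^ 2 + k ^ 2) ^ 2 := by gcongr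
      _ = _ := by field_simp
  have e3 : ‖2 * k / (w ^ 2 + k ^ 2)‖ = 2 * k / (w ^ 2 + k ^ 2) := by
    rw [Real.norm_eq_abs, abs_of_nonneg (by positivity)]
  calc _ ≤ _ := norm_add_le _ _
    _ ≤ 2 * k / (w ^ 2 + k ^ 2) + 2 * k / (w ^ 2 + k ^ 2) := by rw [e3]; gcongr
    _ = _ := by ring

open FourierTransform in
lemma hh_fourier {k c : ℝ} (hk : 0 < k) (hc : 0 ≤ c) (hc1 : c ≤ 1) (w : ℝ) :
    𝓕 (fun v : ℝ => (hhf k c v : ℂ)) w = (hhA k c (2 * π * w) : ℂ) := by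
  rw [Real.fourier_real_eq_integral_exp_smul]
  set h : ℝ → ℂ := fun v => Complex.exp (↑(-2 * π * v * w) * Complex.I) • (hhf k c v : ℂ) with hh
  have hinteg : Integrable h := by
    refine ((hhf_int hk hc hc1).ofReal).bdd_mul (c := 1) ?_ ?_
    · exact Continuous.aestronglyMeasurable (by fun_prop)
    · exact ae_of_all _ fun v => (Complex.norm_exp_ofReal_mul_I _).le
  have hI : ∫ v in Set.Iic 0, h v = ∫ v in Set.Ioi 0, h (-v) := by
    have := integral_comp_neg_Iic 0 (fun v => h (-v))
    simpa using this
  have hneg : Integrable (fun v => h (-v)) := hinteg.comp_neg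
  have e1 : Set.EqOn h (fun x : ℝ => (1 + ((c * k : ℝ) : ℂ) * x : ℂ) *
      Complex.exp (-(k + (2 * π * w : ℝ) * Complex.I) * x)) (Set.Ioi 0) := by
    intro x hx
    have hx' : 0 < x := hx
    simp only [hh, hhf, abs_of_pos hx', smul_eq_mul]
    push_cast
    rw [mul_left_comm, ← Complex.exp_add]
    ring_nf
  have e2 : Set.EqOn (fun v => h (-v)) (fun x : ℝ => (1 + ((c * k : ℝ) : ℂ) * x : ℂ) *
      Complex.exp (-(k - (2 * π * w : ℝ) * Complex.I) * x)) (Set.Ioi 0) := by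
    intro x hx
    have hx' : 0 < x := hx
    simp only [hh, hhf, abs_neg, abs_of_pos hx', smul_eq_mul]
    push_cast
    rw [mul_left_comm, ← Complex.exp_add]
    ring_nf
  rw [← integral_add_compl (measurableSet_Ioi (a := (0 : ℝ))) hinteg, Set.compl_Ioi, hI,
    setIntegral_congr_fun measurableSet_Ioi e1, setIntegral_congr_fun measurableSet_Ioi e2,
    hh_half (by simpa using hk) (hinteg.integrableOn.congr_fun e1 measurableSet_Ioi),
    hh_half (by simpa using hk) (hneg.integrableOn.congr_fun e2 measurableSet_Ioi)]
  generalize 2 * π * w = u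
  have z1 : (k + u * Complex.I : ℂ) ≠ 0 := by
    intro h0
    have := congrArg Complex.re h0
    simp at this
    exact hk.ne' this
  have z2 : (k - u * Complex.I : ℂ) ≠ 0 := by
    intro h0
    have := congrArg Complex.re h0
    simp at this
    exact hk.ne' this
  have z3 : ((u : ℂ) ^ 2 + (k : ℂ) ^ 2) = (k + u * Complex.I) * (k - u * Complex.I) := by
    ring_nf
    rw [Complex.I_sq]
    ring
  have z4 : (2 * k : ℂ) = (k + u * Complex.I) + (k - u * Complex.I) := by ring
  have z5 : (2 * ((k : ℂ) ^ 2 - (u : ℂ) ^ 2)) = (k + u * Complex.I) ^ 2 + (k - u * Complex.I) ^ 2 := by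
    ring_nf
    rw [Complex.I_sq]
    ring
  unfold hhA
  push_cast
  rw [show (2 * k * c * ((k : ℂ) ^ 2 - (u : ℂ) ^ 2)) = k * c * (2 * ((k : ℂ) ^ 2 - (u : ℂ) ^ 2))
    by ring, z5, z3]
  rw [z4]
  field_simp
  ring

open FourierTransform in
lemma hh_inv {k c : ℝ} (hk : 0 < k) (hc : 0 ≤ c) (hc1 : c ≤ 1) {r : ℝ} (hr : 0 < r) :
    Tendsto (fun R => ∫ p in (0 : ℝ)..R, Real.cos (p * r) * hhA k c p) atTop
      (nhds (π * ((1 + c * (k * r)) * Real.exp (-(k * r))))) := by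
  have hF : 𝓕 (fun v : ℝ => (hhf k c v : ℂ)) = fun w : ℝ => (hhA k c (2 * π * w) : ℂ) :=
    funext (hh_fourier hk hc hc1)
  have hA := hhA_int hk hc hc1
  have hA2 : Integrable (fun w : ℝ => hhA k c (2 * π * w)) := hA.comp_mul_left' (by positivity)
  have hinv := congrFun (Continuous.fourierInv_fourier_eq
    (f := fun v : ℝ => (hhf k c v : ℂ)) (Complex.continuous_ofReal.comp (hhf_cont k c))
    (hhf_int hk hc hc1).ofReal (by rw [hF]; exact hA2.ofReal)) r
  rw [hF, Real.fourierInv_eq'] at hinv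
  have hinteg : Integrable (fun v : ℝ => Complex.exp (↑(2 * π * inner ℝ v r) * Complex.I) •
      (hhA k c (2 * π * v) : ℂ)) := by
    refine (hA2.ofReal).bdd_mul (c := 1) ?_ ?_
    · exact Continuous.aestronglyMeasurable (by fun_prop)
    · exact ae_of_all _ fun v => (Complex.norm_exp_ofReal_mul_I _).le
  have hre := integral_re hinteg
  rw [hinv] at hre
  have e1 : ∀ v : ℝ, RCLike.re (Complex.exp (↑(2 * π * inner ℝ v r) * Complex.I) •
      (hhA k c (2 * π * v) : ℂ)) = (fun p => Real.cos (|p| * r) * hhA k c |p|) (2 * π * v) := by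
    intro v
    have hs : hhA k c |2 * π * v| = hhA k c (2 * π * v) := by
      unfold hhA
      rw [sq_abs]
    have hcs : Real.cos (|2 * π * v| * r) = Real.cos (2 * π * v * r) := by
      rw [← Real.cos_abs, ← Real.cos_abs (2 * π * v * r), abs_mul, abs_mul (2 * π * v), abs_abs]
    simp only [hs, hcs, smul_eq_mul]
    rw [RCLike.re_to_complex, Complex.re_mul_ofReal, Complex.exp_ofReal_mul_I_re]
    congr 2
    simp
    ring
  rw [integral_congr_ae (ae_of_all _ e1)] at hre
  rw [Measure.integral_comp_mul_left (fun p => Real.cos (|p| * r) * hhA k c |p|),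
    integral_comp_abs (f := fun p => Real.cos (p * r) * hhA k c p)]
    at hre
  have hval : ∫ p in Set.Ioi (0 : ℝ), Real.cos (p * r) * hhA k c p
      = π * ((1 + c * (k * r)) * Real.exp (-(k * r))) := by
    have hf : RCLike.re ((hhf k c r : ℂ)) = (1 + c * (k * r)) * Real.exp (-(k * r)) := by
      rw [RCLike.re_to_complex, Complex.ofReal_re, hhf, abs_of_pos hr]
    rw [hf, abs_of_pos (by positivity), smul_eq_mul] at hre
    rw [← hre]
    generalize ∫ p in Set.Ioi (0 : ℝ), Real.cos (p * r) * hhA k c p = y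
    field_simp
  rw [← hval]
  refine intervalIntegral_tendsto_integral_Ioi 0 ?_ tendsto_id
  refine Integrable.integrableOn ?_
  refine hA.bdd_mul (c := 1) ?_ ?_
  · exact Continuous.aestronglyMeasurable (by fun_prop)
  · exact ae_of_all _ fun v => abs_cos_le_one _

/-- limit value of the sine integrals -/
noncomputable def hhT (r k : ℝ) (j : ℕ) : ℝ :=
  π / 2 * Real.exp (-(k * r)) * hha (k * r) j / (2 * k ^ 2) ^ j

lemma hh_limits {r k : ℝ} (hr : 0 < r) (hk : 0 < k) (j : ℕ) :
    Tendsto (hhS r k (j + 1)) atTop (nhds (hhT r k j)) ∧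
    Tendsto (hhC r k (j + 1)) atTop (nhds (2 * (j + 1) / r * hhT r k (j + 1))) := by
  induction j with
  | zero =>
    have hC1 : Tendsto (hhC r k 1) atTop (nhds (π / (2 * k) * Real.exp (-(k * r)))) := by
      have h := (hh_inv hk le_rfl zero_le_one hr).const_mul (1 / (2 * k))
      have e : 1 / (2 * k) * (π * ((1 + 0 * (k * r)) * Real.exp (-(k * r)))) =
          π / (2 * k) * Real.exp (-(k * r)) := by
        field_simp
        ring
      rw [e] at h
      refine h.congr (fun R => ?_)
      rw [← intervalIntegral.integral_const_mul]
      unfold hhC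
      congr 1
      funext p
      unfold hhA
      field_simp
      ring
    have hC2 : Tendsto (hhC r k 2) atTop
        (nhds (π / (4 * k ^ 3) * ((1 + k * r) * Real.exp (-(k * r))))) := by
      have h := (hh_inv hk zero_le_one le_rfl hr).const_mul (1 / (4 * k ^ 3))
      have e : 1 / (4 * k ^ 3) * (π * ((1 + 1 * (k * r)) * Real.exp (-(k * r)))) =
          π / (4 * k ^ 3) * ((1 + k * r) * Real.exp (-(k * r))) := by
        rw [one_mul]
        ring
      rw [e] at h
      refine h.congr (fun R => ?_)
      rw [← intervalIntegral.integral_const_mul]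
      unfold hhC
      congr 1
      funext p
      unfold hhA
      have hD : p ^ 2 + k ^ 2 ≠ 0 := by positivity
      field_simp
      ring
    have hL := hh_L (r := r) hk 0
    constructor
    · have h := (((hC1.const_mul (-1)).add (hC2.const_mul (2 * k ^ 2))).sub hL).const_mul (1 / r)
      have e : 1 / r * (-1 * (π / (2 * k) * Real.exp (-(k * r))) +
          2 * k ^ 2 * (π / (4 * k ^ 3) * ((1 + k * r) * Real.exp (-(k * r)))) - 0)
          = hhT r k 0 := by
        simp only [hhT, hha]
        field_simp
        ring
      rw [e] at h
      refine h.congr (fun R => ?_)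
      simp only [Nat.cast_zero, zero_add]
      field_simp
      ring
    · have e : 2 * (((0 : ℕ) : ℝ) + 1) / r * hhT r k (0 + 1)
          = π / (2 * k) * Real.exp (-(k * r)) := by
        simp only [hhT, zero_add, hha_one, Nat.cast_zero]
        field_simp
      rw [e]
      exact hC1
  | succ j ih =>
    obtain ⟨ihS, ihC⟩ := ih
    constructor
    · have h := ((ihC.const_mul r).sub (hh_M (r := r) hk j)).const_mul (1 / (2 * ((j : ℝ) + 1)))
      have e : 1 / (2 * ((j : ℝ) + 1)) * (r * (2 * (j + 1) / r * hhT r k (j + 1)) - 0)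
          = hhT r k (j + 1) := by
        field_simp
        ring
      rw [e] at h
      refine h.congr (fun R => ?_)
      field_simp
      ring
    · have h := (((ihC.const_mul (2 * (j : ℝ) + 1)).add (ihS.const_mul r)).add
        (hh_L (r := r) hk j)).const_mul (1 / (2 * ((j : ℝ) + 1) * k ^ 2))
      have hrec : hha (k * r) (j + 2) = ((2 * j + 1) * hha (k * r) (j + 1)
          + (k * r) ^ 2 / (j + 1) * hha (k * r) j) / (j + 2) := by
        rw [← hha_rec]
        field_simp
      have e : 1 / (2 * ((j : ℝ) + 1) * k ^ 2) * ((2 * (j : ℝ) + 1) *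
          (2 * (j + 1) / r * hhT r k (j + 1)) + r * hhT r k j + 0)
          = 2 * (((j + 1 : ℕ) : ℝ) + 1) / r * hhT r k (j + 1 + 1) := by
        simp only [hhT, hrec, pow_succ]
        push_cast
        field_simp
        ring
      rw [e] at h
      refine h.congr (fun R => ?_)
      field_simp
      ring

lemma hh_sum (n : ℕ) (hn : 1 ≤ n) (r k : ℝ) : helmholtzG3 n r k =
    (1 / (4 * Real.pi)) * (Real.exp (-(k * r)) / r) * ∑ j ∈ Finset.range n, hha (k * r) j := by
  obtain ⟨n, rfl⟩ : ∃ m, n = m + 1 := ⟨n - 1, by omega⟩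
  unfold helmholtzG3
  rw [Finset.sum_range_succ', add_comm (∑ j ∈ Finset.range n, hha (k * r) (j + 1)),
    Finset.sum_Ico_eq_sum_range]
  congr 2
  refine Finset.sum_congr (by simp) (fun i _ => ?_)
  simp only [hha, hhb, hhbeta]
  rw [add_comm 1 i, Nat.add_sub_cancel, Finset.mul_sum, Finset.mul_sum]
  refine Finset.sum_congr rfl (fun m _ => ?_)
  rw [show 2 * (i + 1) - m - 2 = 2 * i - m by omega, show i + 1 - m - 1 = i - m by omega, pow_succ (k * r) m]
  field_simp

/-- For every integer `n ≥ 1` and all reals `r > 0`, `k > 0`,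
the 3D inverse Fourier transform of `ĝ_n` satisfies
`(1/(2π²r)) ∑_{j=0}^{n-1} (2k²)^j ∫_0^∞ p sin(pr)/(p² + k²)^{j+1} dp = g_n(r,k)`,
where the integrals are understood as improper Riemann integrals
`lim_{R→∞} ∫_0^R p sin(pr)/(p² + k²)^{j+1} dp` (this limiting interpretation is
needed for the conditionally convergent `j = 0` term). -/
theorem helmholtzG3_inverse_fourier (n : ℕ) (hn : 1 ≤ n) (r k : ℝ)
    (hr : 0 < r) (hk : 0 < k) :
    Tendsto (fun R : ℝ =>
        (1 / (2 * Real.pi ^ 2 * r)) * ∑ j ∈ Finset.range n,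
          (2 * k ^ 2) ^ j *
            ∫ p in (0 : ℝ)..R, p * Real.sin (p * r) / (p ^ 2 + k ^ 2) ^ (j + 1))
      atTop (nhds (helmholtzG3 n r k)) := by
  have h : Tendsto (fun R : ℝ => (1 / (2 * Real.pi ^ 2 * r)) * ∑ j ∈ Finset.range n,
      (2 * k ^ 2) ^ j * hhS r k (j + 1) R) atTop
      (nhds ((1 / (2 * Real.pi ^ 2 * r)) * ∑ j ∈ Finset.range n,
        (2 * k ^ 2) ^ j * hhT r k j)) :=
    (tendsto_finsetSum _ fun j _ => (hh_limits hr hk j).1.const_mul _).const_mul _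
  have e : (1 / (2 * Real.pi ^ 2 * r)) * ∑ j ∈ Finset.range n, (2 * k ^ 2) ^ j * hhT r k j
      = helmholtzG3 n r k := by
    rw [hh_sum n hn, Finset.mul_sum, Finset.mul_sum]
    refine Finset.sum_congr rfl (fun j _ => ?_)
    unfold hhT
    field_simp
    ring
  rw [e] at h
  exact h
end

section
/- For every integer n ≥ 1 and every k > 0, there exists a function f : ℝ³ → ℝ of class C^{2n−2} such that f(x) = cos(k‖x‖)/(4π‖x‖) − g_n(‖x‖, k) for all x ≠ 0; that is, the real part of the oscillatory component of the 3D Helmholtz Green's function has continuous partial derivatives at zero up to order 2n − 2. -/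
open scoped ContDiff

theorem homog_bound {E F : Type} [NormedAddCommGroup E] [NormedSpace ℝ E] [FiniteDimensional ℝ E]
    [NormedAddCommGroup F] [NormedSpace ℝ F] (d : ℕ) (f : E → F)
    (hf : ∀ x, x ≠ 0 → ContDiffAt ℝ ∞ f x)
    (hh : ∀ c : ℝ, 0 < c → ∀ x, f (c • x) = c ^ (d + 1) • f x) :
    f 0 = 0 ∧ ∃ C : ℝ, ∀ x, ‖f x‖ ≤ C * ‖x‖ ^ (d + 1) := by
  have h0 : f 0 = 0 := by
    have h := hh 2 (by norm_num) 0
    rw [smul_zero] at h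
    have h2 : ((2 : ℝ) ^ (d + 1) - 1) • f 0 = 0 := by
      rw [sub_smul, one_smul, ← h, sub_self]
    rcases smul_eq_zero.1 h2 with h3 | h3
    · have : (1 : ℝ) < 2 ^ (d + 1) := one_lt_pow₀ (by norm_num) (by omega)
      linarith
    · exact h3
  refine ⟨h0, ?_⟩
  have : ProperSpace E := FiniteDimensional.proper ℝ E
  obtain ⟨C, hC⟩ := (isCompact_sphere (0 : E) 1).exists_bound_of_continuousOn (f := f) (by
    intro x hx
    have : x ≠ 0 := by
      rintro rfl
      simp at hx
    exact (hf x this).continuousAt.continuousWithinAt)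
  refine ⟨C, fun x => ?_⟩
  by_cases hx : x = 0
  · subst hx
    simp [h0]
  have hn : 0 < ‖x‖ := norm_pos_iff.2 hx
  have h1 : f x = ‖x‖ ^ (d + 1) • f (‖x‖⁻¹ • x) := by
    rw [← hh _ hn, smul_smul, mul_inv_cancel₀ hn.ne', one_smul]
  rw [h1, norm_smul, norm_pow, norm_norm, mul_comm]
  gcongr
  apply hC
  simp [norm_smul, hn.ne']

theorem homog_contDiff {E : Type} [NormedAddCommGroup E] [NormedSpace ℝ E]
    [FiniteDimensional ℝ E] (d : ℕ) :
    ∀ {F : Type} [NormedAddCommGroup F] [NormedSpace ℝ F] (f : E → F)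
    (_ : ∀ x, x ≠ 0 → ContDiffAt ℝ ∞ f x)
    (_ : ∀ c : ℝ, 0 < c → ∀ x, f (c • x) = c ^ (d + 1) • f x), ContDiff ℝ d f := by
  induction d with
  | zero =>
    intro F _ _ f hf hh
    obtain ⟨h0, C, hC⟩ := homog_bound 0 f hf hh
    simp only [Nat.cast_zero, contDiff_zero]
    rw [continuous_iff_continuousAt]
    intro x
    by_cases hx : x = 0
    · subst hx
      rw [ContinuousAt, h0]
      apply squeeze_zero_norm hC
      have : Continuous fun x : E => C * ‖x‖ ^ (0 + 1) := by fun_prop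
      simpa using this.tendsto 0
    · exact (hf x hx).continuousAt
  | succ d ih =>
    intro F _ _ f hf hh
    obtain ⟨h0, C, hC⟩ := homog_bound (d + 1) f hf hh
    have hd0 : HasFDerivAt f (0 : E →L[ℝ] F) 0 := by
      have h1 : f =O[nhds 0] fun x : E => ‖x‖ ^ (d + 2) :=
        Asymptotics.IsBigO.of_bound C (Filter.Eventually.of_forall fun x => by
          simpa using hC x)
      have h2 : (fun x : E => ‖x‖ ^ (d + 2)) =o[nhds 0] fun x : E => x := by
        simpa using Asymptotics.isLittleO_norm_pow_id (E' := E) (n := d + 2) (by omega)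
      rw [hasFDerivAt_iff_isLittleO]
      simpa [h0] using h1.trans_isLittleO h2
    push_cast
    rw [contDiff_succ_iff_fderiv]
    refine ⟨fun x => ?_, by simp, ih _ (fun x hx => ?_) (fun c hc x => ?_)⟩
    · by_cases hx : x = 0
      · subst hx
        exact hd0.differentiableAt
      · exact (hf x hx).differentiableAt (by simp)
    · exact (hf x hx).fderiv_right (by simp)
    · have h1 : fderiv ℝ (fun y => f (c • y)) x = c • fderiv ℝ f (c • x) := by
        exact fderiv_comp_smul c
      have h2 : (fun y => f (c • y)) = c ^ (d + 1 + 1) • f := by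
        funext y
        exact hh c hc y
      rw [h2, fderiv_const_smul_field] at h1
      have h3 : c • (c ^ (d + 1) • fderiv ℝ f x) = c • fderiv ℝ f (c • x) := by
        rw [← h1, smul_smul]
        simp [pow_succ']
      exact (smul_right_injective _ hc.ne' h3).symm

theorem norm_pow_contDiff (d : ℕ) :
    ContDiff ℝ d (fun x : EuclideanSpace ℝ (Fin 3) => ‖x‖ ^ (d + 1)) := by
  apply homog_contDiff d
  · intro x hx
    exact (contDiffAt_norm ℝ hx).pow _
  · intro c hc x
    simp [norm_smul, abs_of_pos hc, mul_pow]

/-- everywhere convergent power series define smooth functions -/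
theorem entire_contDiff (b : ℕ → ℝ) (hb : ∀ t : ℝ, Summable fun m => b m * t ^ m) :
    ContDiff ℝ ∞ (fun t : ℝ => ∑' m, b m * t ^ m) := by
  set p := FormalMultilinearSeries.ofScalars ℝ b with hp
  have hr : p.radius = ⊤ := by
    rw [FormalMultilinearSeries.radius_eq_top_iff_summable_norm]
    intro r
    have := (hb r).norm
    simpa [hp, FormalMultilinearSeries.ofScalars_norm] using this
  have h := (p.hasFPowerSeriesOnBall (by simp [hr])).analyticOnNhd
  rw [hr] at h
  have h' : AnalyticOnNhd ℝ p.sum Set.univ := fun x _ => h x (by simp)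
  have e : p.sum = fun t : ℝ => ∑' m, b m * t ^ m := by
    funext t
    simp [FormalMultilinearSeries.sum, hp, mul_comm]
  rw [← e]
  exact contDiffOn_univ.1 h'.contDiffOn_of_completeSpace

/-- `p` converges everywhere to `f`. -/
def EntSeries (p : PowerSeries ℝ) (f : ℝ → ℝ) : Prop :=
  ∀ t : ℝ, HasSum (fun m => PowerSeries.coeff m p * t ^ m) (f t)

theorem EntSeries.mul {p q : PowerSeries ℝ} {f g : ℝ → ℝ} (hp : EntSeries p f)
    (hq : EntSeries q g) : EntSeries (p * q) (fun t => f t * g t) := by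
  intro t
  have hp' := (hp t).summable.norm
  have hq' := (hq t).summable.norm
  have e : (fun m => PowerSeries.coeff m (p * q) * t ^ m) = fun n =>
      ∑ kl ∈ Finset.HasAntidiagonal.antidiagonal n, (PowerSeries.coeff kl.1 p * t ^ kl.1) *
        (PowerSeries.coeff kl.2 q * t ^ kl.2) := by
    funext n
    rw [PowerSeries.coeff_mul, Finset.sum_mul]
    refine Finset.sum_congr rfl fun x hx => ?_
    rw [← Finset.HasAntidiagonal.mem_antidiagonal.1 hx, pow_add]
    ring
  rw [e]
  have h1 := (summable_norm_sum_mul_antidiagonal_of_summable_norm hp' hq').of_norm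
  have h2 := tsum_mul_tsum_eq_tsum_sum_antidiagonal_of_summable_norm hp' hq'
  rw [(hp t).tsum_eq, (hq t).tsum_eq] at h2
  simpa only [h2] using h1.hasSum

theorem EntSeries.smul {p : PowerSeries ℝ} {f : ℝ → ℝ} (hp : EntSeries p f) (a : ℝ) :
    EntSeries (a • p) (fun t => a * f t) := by
  intro t
  simpa [mul_assoc] using (hp t).mul_left a

theorem EntSeries.sub {p q : PowerSeries ℝ} {f g : ℝ → ℝ} (hp : EntSeries p f)
    (hq : EntSeries q g) : EntSeries (p - q) (fun t => f t - g t) := by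
  intro t
  simpa [sub_mul] using (hp t).sub (hq t)

theorem EntSeries.sum {ι : Type} (s : Finset ι) {p : ι → PowerSeries ℝ} {f : ι → ℝ → ℝ}
    (hp : ∀ i ∈ s, EntSeries (p i) (f i)) : EntSeries (∑ i ∈ s, p i) (fun t => ∑ i ∈ s, f i t) := by
  intro t
  simpa [Finset.sum_mul] using hasSum_sum fun i hi => hp i hi t

theorem EntSeries.X : EntSeries PowerSeries.X (fun t => t) := by
  intro t
  have := hasSum_single (f := fun m => PowerSeries.coeff m (PowerSeries.X : PowerSeries ℝ) * t ^ m) 1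
    (by intro m hm; simp [PowerSeries.coeff_X, hm])
  simpa using this

noncomputable def eNeg : PowerSeries ℝ := PowerSeries.mk fun m => (-1) ^ m / (m.factorial : ℝ)

theorem EntSeries.eNeg : EntSeries eNeg (fun t => Real.exp (-t)) := by
  intro t
  have := NormedSpace.expSeries_div_hasSum_exp (-t)
  rw [← Real.exp_eq_exp_ℝ] at this
  convert! this using 2
  rw [_root_.eNeg, PowerSeries.coeff_mk, neg_pow t]
  ring

noncomputable def thetaC (j i : ℕ) : ℝ :=
  if i ≤ j then ((i + 2 * (j - i)).factorial : ℝ) / (i.factorial * (j - i).factorial * 2 ^ (j - i))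
  else 0

noncomputable def theta (j : ℕ) : PowerSeries ℝ := PowerSeries.mk (thetaC j)

theorem EntSeries.theta (j : ℕ) :
    EntSeries (theta j) (fun t => ∑ i ∈ Finset.range (j + 1), thetaC j i * t ^ i) := by
  intro t
  simp only [_root_.theta, PowerSeries.coeff_mk]
  apply hasSum_sum_of_ne_finset_zero
  intro i hi
  have : ¬ i ≤ j := by simpa using hi
  simp [thetaC, this]

noncomputable def ySer : ℕ → PowerSeries ℝ
  | 0 => eNeg
  | j + 1 => PowerSeries.X * (eNeg * theta j)

theorem thetaC_rec (j i : ℕ) :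
    thetaC (j + 1) (i + 1) - (i + 2) * thetaC (j + 1) (i + 2) = thetaC j i := by
  rcases lt_trichotomy i j with h | h | h
  · obtain ⟨e, rfl⟩ : ∃ e, j = i + (e + 1) := ⟨j - i - 1, by omega⟩
    have h1 : i + (e + 1) + 1 - (i + 1) = e + 1 := by omega
    have h2 : i + (e + 1) + 1 - (i + 2) = e := by omega
    have h3 : i + (e + 1) - i = e + 1 := by omega
    rw [thetaC, thetaC, thetaC, if_pos (by omega), if_pos (by omega), if_pos (by omega), h1, h2, h3]
    rw [show i + 1 + 2 * (e + 1) = (i + 2 * e + 2) + 1 by ring,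
      show i + 2 + 2 * e = i + 2 * e + 2 by ring, show i + 2 * (e + 1) = i + 2 * e + 2 by ring,
      Nat.factorial_succ (i + 2 * e + 2), Nat.factorial_succ (i + 1), Nat.factorial_succ i,
      Nat.factorial_succ e]
    have a1 : (i.factorial : ℝ) ≠ 0 := by positivity
    have a2 : (e.factorial : ℝ) ≠ 0 := by positivity
    have a3 : (i : ℝ) + 1 ≠ 0 := by positivity
    have a4 : (i : ℝ) + 2 ≠ 0 := by positivity
    have a5 : (e : ℝ) + 1 ≠ 0 := by positivity
    have a6 : (i : ℝ) + 1 + 1 ≠ 0 := by positivity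
    push_cast
    field_simp
    ring
  · subst h
    have a1 : (i.factorial : ℝ) ≠ 0 := by positivity
    have a2 : ((i + 1).factorial : ℝ) ≠ 0 := by positivity
    simp [thetaC, a1, a2]
  · have h1 : ¬ i ≤ j := by omega
    have h2 : ¬ i + 2 ≤ j + 1 := by omega
    simp [thetaC, h1, h2]

theorem thetaC_zero (j : ℕ) : thetaC (j + 1) 0 = thetaC (j + 1) 1 := by
  have e1 : 2 * (j + 1) = (2 * j + 1) + 1 := by ring
  have e2 : 1 + 2 * j = 2 * j + 1 := by ring
  simp only [thetaC, zero_le, if_true, Nat.sub_zero, zero_add, Nat.add_sub_cancel,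
    Nat.le_add_left, e1, e2, Nat.factorial_succ (2 * j + 1), Nat.factorial_succ j,
    Nat.factorial_zero, Nat.factorial_one]
  have a1 : (j.factorial : ℝ) ≠ 0 := by positivity
  have a5 : (j : ℝ) + 1 ≠ 0 := by positivity
  push_cast
  field_simp
  ring

open PowerSeries in
theorem theta_rec (j : ℕ) : theta (j + 1) - derivative ℝ (theta (j + 1)) = X * theta j := by
  ext i
  cases i with
  | zero =>
    rw [map_sub, coeff_derivative, coeff_zero_X_mul]
    simp [theta, thetaC_zero]
  | succ i =>
    rw [coeff_succ_X_mul]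
    simp only [map_sub, coeff_derivative, theta, coeff_mk]
    rw [← thetaC_rec j i]
    push_cast
    ring

open PowerSeries in
theorem deriv_eNeg : derivative ℝ eNeg = - eNeg := by
  ext m
  simp only [coeff_derivative, eNeg, coeff_mk, map_neg, Nat.factorial_succ]
  have a1 : (m.factorial : ℝ) ≠ 0 := by positivity
  have a5 : (m : ℝ) + 1 ≠ 0 := by positivity
  push_cast
  field_simp
  ring

theorem theta_zero : theta 0 = 1 := by
  ext i
  cases i <;> simp [theta, thetaC, PowerSeries.coeff_one]

open PowerSeries in
theorem deriv_w (j : ℕ) : derivative ℝ (eNeg * theta j) = - ySer j := by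
  cases j with
  | zero => simp [theta_zero, deriv_eNeg, ySer]
  | succ j =>
    rw [Derivation.leibniz, deriv_eNeg, ySer]
    have h : derivative ℝ (theta (j + 1)) = theta (j + 1) - X * theta j := by
      rw [← theta_rec]; ring
    rw [h]
    simp only [smul_eq_mul]
    ring

open PowerSeries in
theorem coeff_ySer (j : ℕ) : ∀ m : ℕ, coeff (2 * m) (ySer j) =
    (m.choose j : ℝ) * j.factorial * (-2) ^ j / (2 * m).factorial := by
  induction j with
  | zero => intro m; simp [ySer, eNeg]
  | succ j ih =>
    intro m
    cases m with
    | zero => simp [ySer]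
    | succ m =>
      have h := congrArg (coeff (2 * m)) (deriv_w j)
      rw [coeff_derivative, map_neg, ih] at h
      rw [ySer, show 2 * (m + 1) = 2 * m + 1 + 1 by ring, coeff_succ_X_mul]
      have a : ((2 * m : ℕ) : ℝ) + 1 ≠ 0 := by positivity
      rw [← eq_div_iff a] at h
      rw [h, Nat.factorial_succ (2 * m + 1), Nat.factorial_succ (2 * m), Nat.factorial_succ j]
      have c : ((m + 1 : ℕ) : ℝ) * m.choose j = (m + 1).choose (j + 1) * ((j + 1 : ℕ) : ℝ) := by
        exact_mod_cast Nat.add_one_mul_choose_eq m j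
      have a1 : ((2 * m).factorial : ℝ) ≠ 0 := by positivity
      have a2 : (m : ℝ) + 1 ≠ 0 := by positivity
      push_cast at a c ⊢
      have a3 : 2 * (m : ℝ) + 1 + 1 ≠ 0 := by positivity
      field_simp
      have a4 : (m.choose j : ℝ) = (m + 1).choose (j + 1) * ((j : ℝ) + 1) / (m + 1) := by
        field_simp; linarith
      rw [a4]
      field_simp
      ring

noncomputable def cosSer : PowerSeries ℝ :=
  PowerSeries.mk fun m => if Even m then (-1) ^ (m / 2) / (m.factorial : ℝ) else 0

theorem EntSeries.cos : EntSeries cosSer Real.cos := by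
  intro t
  have h := HasSum.even_add_odd (f := fun m => PowerSeries.coeff m cosSer * t ^ m)
    (m := Real.cos t) (m' := 0) (by
      convert! Real.hasSum_cos t using 2
      simp [cosSer]
      ring) (by
      convert! hasSum_zero using 2
      simp [cosSer])
  simpa using h

noncomputable def fSer (n : ℕ) : PowerSeries ℝ :=
  cosSer - ∑ j ∈ Finset.range n, (1 / (j.factorial : ℝ)) • ySer j

theorem coeff_fSer (n m : ℕ) (h : m < n) : PowerSeries.coeff (2 * m) (fSer n) = 0 := by
  have h1 : ∑ j ∈ Finset.range n, ((m.choose j : ℝ) * (-2) ^ j) = (-1) ^ m := by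
    have := add_pow (-2 : ℝ) 1 m
    rw [show (-2 : ℝ) + 1 = -1 by norm_num] at this
    rw [this]
    symm
    apply Finset.sum_subset_zero_on_sdiff
    · intro x; simp; omega
    · intro x hx
      have : m < x := by simp at hx; omega
      simp [Nat.choose_eq_zero_of_lt this]
    · intro x _; simp; ring
  have h2 : ∀ j, PowerSeries.coeff (2 * m) ((1 / (j.factorial : ℝ)) • ySer j) =
      ((m.choose j : ℝ) * (-2) ^ j) / (2 * m).factorial := by
    intro j
    have a1 : (j.factorial : ℝ) ≠ 0 := by positivity
    simp only [PowerSeries.coeff_smul, coeff_ySer, smul_eq_mul]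
    field_simp
  rw [fSer, map_sub, map_sum]
  simp only [h2]
  rw [← Finset.sum_div, h1]
  simp [cosSer]

/-- splitting an entire series whose first even coefficients vanish -/
theorem EntSeries.split {p : PowerSeries ℝ} {f : ℝ → ℝ} (hp : EntSeries p f) (n : ℕ)
    (h : ∀ m < n, PowerSeries.coeff (2 * m) p = 0) :
    ∃ H B : ℝ → ℝ, ContDiff ℝ ∞ H ∧ ContDiff ℝ ∞ B ∧
      ∀ t, f t = t ^ (2 * n) * H (t ^ 2) + t * B (t ^ 2) := by
  have key : ∀ a : ℕ, ∀ u : ℝ, Summable fun m => PowerSeries.coeff (2 * m + a) p * u ^ m := by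
    intro a u
    set s : ℝ := |u| + 1 with hs
    have hs1 : 1 ≤ s := by simp [hs]
    have h1 := (hp s).summable.norm.comp_injective
      (i := fun m : ℕ => 2 * m + a) (by intro x y hxy; simpa using hxy)
    refine Summable.of_norm_bounded h1 fun m => ?_
    simp only [Function.comp, norm_mul, norm_pow, Real.norm_eq_abs]
    gcongr
    rw [abs_of_nonneg (by linarith : (0 : ℝ) ≤ s)]
    calc |u| ^ m ≤ s ^ m := by gcongr; simp [hs]
      _ ≤ s ^ (2 * m + a) := pow_le_pow_right₀ hs1 (by omega)
  refine ⟨fun u => ∑' m, PowerSeries.coeff (2 * m + 2 * n) p * u ^ m,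
    fun u => ∑' m, PowerSeries.coeff (2 * m + 1) p * u ^ m,
    entire_contDiff _ (key _), entire_contDiff _ (key _), fun t => ?_⟩
  have he0 := ((key (2 * n) (t ^ 2)).hasSum).mul_left (t ^ (2 * n))
  have ho := ((key 1 (t ^ 2)).hasSum).mul_left t
  have he : HasSum (fun m => PowerSeries.coeff (2 * m) p * t ^ (2 * m))
      (t ^ (2 * n) * ∑' m, PowerSeries.coeff (2 * m + 2 * n) p * (t ^ 2) ^ m) := by
    rw [← hasSum_nat_add_iff' n]
    rw [Finset.sum_eq_zero (fun i hi => by rw [h i (by simpa using hi), zero_mul]), sub_zero]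
    convert! he0 using 2 with m
    rw [mul_add, pow_add, pow_mul t 2 m]
    ring
  refine (hp t).unique (HasSum.even_add_odd he ?_)
  convert! ho using 2 with m
  rw [pow_succ, pow_mul t 2 m]
  ring

noncomputable def yFun : ℕ → ℝ → ℝ
  | 0 => fun t => Real.exp (-t)
  | j + 1 => fun t => t * (Real.exp (-t) * ∑ i ∈ Finset.range (j + 1), thetaC j i * t ^ i)

theorem EntSeries.y (j : ℕ) : EntSeries (ySer j) (yFun j) := by
  cases j with
  | zero => exact EntSeries.eNeg
  | succ j => exact EntSeries.X.mul (EntSeries.eNeg.mul (EntSeries.theta j))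

theorem G3_eq (n : ℕ) (hn : 1 ≤ n) (r k : ℝ) : helmholtzG3 n r k =
    1 / (4 * Real.pi) * (1 / r) * ∑ j ∈ Finset.range n, (1 / (j.factorial : ℝ)) * yFun j (k * r) := by
  rw [helmholtzG3, Finset.range_eq_Ico n,
    Finset.sum_eq_sum_Ico_succ_bot (a := 0) (b := n) (by omega)]
  have : ∀ j ∈ Finset.Ico 1 n, (1 / (j.factorial : ℝ)) * yFun j (k * r) =
      Real.exp (-(k * r)) * ((1 / (2 ^ (j - 1) * (Nat.factorial j : ℝ))) *
        ∑ m ∈ Finset.range j,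
          ((Nat.factorial (2 * j - m - 2) : ℝ) * 2 ^ m) /
              ((Nat.factorial m : ℝ) * (Nat.factorial (j - m - 1) : ℝ)) *
            (k * r) ^ (m + 1)) := by
    intro j hj
    obtain ⟨i, rfl⟩ : ∃ i, j = i + 1 := ⟨j - 1, by simp at hj; omega⟩
    simp only [yFun, Finset.mul_sum, Nat.add_sub_cancel]
    refine Finset.sum_congr rfl fun m hm => ?_
    have hm' : m ≤ i := by simp at hm; omega
    obtain ⟨d, rfl⟩ := Nat.exists_eq_add_of_le hm'
    rw [thetaC, if_pos hm', show m + d - m = d by omega, show m + d + 1 - m - 1 = d by omega,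
      show 2 * (m + d + 1) - m - 2 = m + 2 * d by omega]
    have a1 : (d.factorial : ℝ) ≠ 0 := by positivity
    have a2 : (m.factorial : ℝ) ≠ 0 := by positivity
    have a3 : ((m + d + 1).factorial : ℝ) ≠ 0 := by positivity
    field_simp
    ring
  rw [zero_add, Finset.sum_congr rfl this, ← Finset.mul_sum]
  simp only [yFun, Nat.factorial_zero]
  push_cast
  ring

/-- For every integer `n ≥ 1` and `k > 0`, the real part of the
oscillatory component `cos(k‖x‖)/(4π‖x‖) - g_n(‖x‖,k)` of the 3D Helmholtz
Green's function extends to a function of class `C^{2n-2}` on all of `ℝ³`. -/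
theorem helmholtz_oscill_smoothness (n : ℕ) (hn : 1 ≤ n) (k : ℝ) (hk : 0 < k) :
    ∃ f : EuclideanSpace ℝ (Fin 3) → ℝ, ContDiff ℝ (2 * n - 2 : ℕ) f ∧
      ∀ x : EuclideanSpace ℝ (Fin 3), x ≠ 0 →
        f x = Real.cos (k * ‖x‖) / (4 * Real.pi * ‖x‖) - helmholtzG3 n ‖x‖ k := by
  have hent : EntSeries (fSer n) _ := EntSeries.cos.sub
    (EntSeries.sum (Finset.range n) fun j _ => (EntSeries.y j).smul (1 / (j.factorial : ℝ)))
  obtain ⟨H, B, hH, hB, hF⟩ := hent.split n (fun m hm => coeff_fSer n m hm)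
  refine ⟨fun x => 1 / (4 * Real.pi) * (k ^ (2 * n) * ‖x‖ ^ (2 * n - 2 + 1) *
    H (k ^ 2 * ‖x‖ ^ 2) + k * B (k ^ 2 * ‖x‖ ^ 2)), ?_, ?_⟩
  · have h1 := norm_pow_contDiff (2 * n - 2)
    have h2 : ContDiff ℝ ∞ fun x : EuclideanSpace ℝ (Fin 3) => k ^ 2 * ‖x‖ ^ 2 :=
      contDiff_const.mul (contDiff_norm_sq ℝ)
    have h3 := contDiff_infty.1 (hH.comp h2) (2 * n - 2)
    have h4 := contDiff_infty.1 (hB.comp h2) (2 * n - 2)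
    exact contDiff_const.mul (((contDiff_const.mul h1).mul h3).add (contDiff_const.mul h4))
  · intro x hx
    have hn0 : ‖x‖ ≠ 0 := norm_ne_zero_iff.2 hx
    have h := hF (k * ‖x‖)
    rw [G3_eq n hn, eq_add_of_sub_eq h]
    have e : (k * ‖x‖) ^ (2 * n) = k ^ (2 * n) * ‖x‖ ^ (2 * n - 2 + 1) * ‖x‖ := by
      rw [mul_pow, mul_assoc, ← pow_succ]
      congr 2
      omega
    rw [e, mul_pow]
    have := Real.pi_pos.ne'
    field_simp
    ring
end

section
/- For every k > 0, the function q_4(r,k) = cos(kr)/(4πr) − g_4(r,k) satisfies q_4(r,k) = (k/(4π))(−1 + (kr)⁴/120 − (kr)⁶/840 + (kr)⁷/2520) + O(r⁸) as r → 0⁺; i.e., there exist C > 0 and δ > 0 such that |q_4(r,k) − (k/(4π))(−1 + (kr)⁴/120 − (kr)⁶/840 + (kr)⁷/2520)| ≤ C r⁸ for all 0 < r < δ. -/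
theorem cos_aux {t : ℝ} (h0 : 0 < t) (h1 : t ≤ 1) :
    |Real.cos t - (1 - t^2/2 + t^4/24 - t^6/720 + t^8/40320)| ≤ t^9 := by
  have hn : ‖(t:ℂ) * Complex.I‖ = t := by simp [abs_of_pos h0]
  have h := Complex.exp_bound (x := (t:ℂ) * Complex.I) (by rw [hn]; exact h1) (n := 9) (by norm_num)
  rw [hn] at h
  have h2 := (Complex.abs_re_le_norm _).trans h
  have e : (Complex.exp ((t:ℂ) * Complex.I) -
      ∑ m ∈ Finset.range 9, ((t:ℂ) * Complex.I)^m / m.factorial).re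
      = Real.cos t - (1 - t^2/2 + t^4/24 - t^6/720 + t^8/40320) := by
    rw [Complex.sub_re, Complex.exp_ofReal_mul_I_re]
    congr 1
    have : ∑ m ∈ Finset.range 9, ((t:ℂ) * Complex.I)^m / m.factorial
      = ((1 - t^2/2 + t^4/24 - t^6/720 + t^8/40320 : ℝ) : ℂ)
        + ((t - t^3/6 + t^5/120 - t^7/5040 : ℝ) : ℂ) * Complex.I := by
      have i2 := Complex.I_sq
      have i3 : Complex.I^3 = -Complex.I := Complex.I_pow_three
      have i4 := Complex.I_pow_four
      have i5 : Complex.I^5 = Complex.I := by rw [pow_succ, i4, one_mul]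
      have i6 : Complex.I^6 = -1 := by rw [pow_succ, i5, ← sq, i2]
      have i7 : Complex.I^7 = -Complex.I := by rw [pow_succ, i6]; ring
      have i8 : Complex.I^8 = 1 := by rw [pow_succ, i7, neg_mul, ← sq, i2]; norm_num
      simp only [Finset.sum_range_succ, Finset.sum_range_zero, mul_pow, Nat.factorial,
        i2, i3, i4, i5, i6, i7, i8]
      push_cast
      ring
    rw [this, Complex.add_re, Complex.re_ofReal_mul]
    simp only [Complex.ofReal_re, Complex.I_re, mul_zero, add_zero]
  rw [e] at h2
  refine h2.trans ?_
  have : (0:ℝ) < t^9 := by positivity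
  norm_num [Nat.factorial]
  linarith

theorem exp_aux {t : ℝ} (h0 : 0 < t) (h1 : t ≤ 1) :
    |Real.exp (-t) - (1 - t + t^2/2 - t^3/6 + t^4/24 - t^5/120 + t^6/720 - t^7/5040 + t^8/40320)|
      ≤ t^9 := by
  have hn : |-t| = t := by rw [abs_neg, abs_of_pos h0]
  have h := Real.exp_bound (x := -t) (by rw [hn]; exact h1) (n := 9) (by norm_num)
  rw [hn] at h
  have e : ∑ m ∈ Finset.range 9, (-t)^m / m.factorial
      = 1 - t + t^2/2 - t^3/6 + t^4/24 - t^5/120 + t^6/720 - t^7/5040 + t^8/40320 := by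
    simp only [Finset.sum_range_succ, Finset.sum_range_zero, Nat.factorial]
    push_cast
    ring
  rw [e] at h
  refine h.trans ?_
  have : (0:ℝ) < t^9 := by positivity
  norm_num [Nat.factorial]
  linarith

theorem main_aux {t : ℝ} (h0 : 0 < t) (h1 : t ≤ 1) :
    |Real.cos t - Real.exp (-t) * (1 + 2*t + t^2 + 1/6*t^3)
      - t * (-1 + t^4/120 - t^6/840 + t^7/2520)| ≤ 20 * t^9 := by
  have hc := cos_aux h0 h1
  have he := exp_aux h0 h1
  set C := Real.cos t - (1 - t^2/2 + t^4/24 - t^6/720 + t^8/40320) with hC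
  set E := Real.exp (-t) -
    (1 - t + t^2/2 - t^3/6 + t^4/24 - t^5/120 + t^6/720 - t^7/5040 + t^8/40320) with hE
  have t2 : t^2 ≤ 1 := pow_le_one₀ h0.le h1
  have t3 : t^3 ≤ 1 := pow_le_one₀ h0.le h1
  have p2 : 0 < t^2 := by positivity
  have p3 : 0 < t^3 := by positivity
  have p9 : 0 < t^9 := by positivity
  have key : Real.cos t - Real.exp (-t) * (1 + 2*t + t^2 + 1/6*t^3)
      - t * (-1 + t^4/120 - t^6/840 + t^7/2520)
      = C - E * (1 + 2*t + t^2 + 1/6*t^3)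
        + t^9 * (-(2/40320 - 1/5040 + 1/4320) + (-1/40320 + 1/30240) * t - 1/241920 * t^2) := by
    rw [hC, hE]; ring
  rw [key]
  have a1 : |E * (1 + 2*t + t^2 + 1/6*t^3)| ≤ t^9 * 5 := by
    rw [abs_mul]
    refine mul_le_mul he ?_ (abs_nonneg _) p9.le
    rw [abs_of_pos (by positivity)]
    linarith
  have a2 : |t^9 * (-(2/40320 - 1/5040 + 1/4320) + (-1/40320 + 1/30240) * t - 1/241920 * t^2)|
      ≤ t^9 * 1 := by
    rw [abs_mul, abs_of_pos p9]
    refine mul_le_mul_of_nonneg_left ?_ p9.le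
    rw [abs_le]
    constructor <;> linarith
  have b1 := abs_le.mp a1
  have b2 := abs_le.mp a2
  have b3 := abs_le.mp hc
  rw [abs_le]
  constructor <;> linarith [b1.1, b1.2, b2.1, b2.2, b3.1, b3.2]

/-- For every `k > 0`, the real part of the oscillatory component
`q₄(r,k) = cos(kr)/(4πr) - g₄(r,k)` with
`g₄(r,k) = (1/(4π)) (e^{-kr}/r)(1 + 2kr + (kr)² + (1/6)(kr)³)` satisfies
`q₄(r,k) = (k/(4π))(-1 + (kr)⁴/120 - (kr)⁶/840 + (kr)⁷/2520) + O(r⁸)` as `r → 0⁺`. -/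
theorem helmholtz_q4_taylor (k : ℝ) (hk : 0 < k) :
    ∃ C > (0 : ℝ), ∃ δ > (0 : ℝ), ∀ r : ℝ, 0 < r → r < δ →
      |Real.cos (k * r) / (4 * Real.pi * r) -
          (1 / (4 * Real.pi)) * (Real.exp (-(k * r)) / r) *
            (1 + 2 * (k * r) + (k * r) ^ 2 + 1 / 6 * (k * r) ^ 3) -
        k / (4 * Real.pi) *
          (-1 + (k * r) ^ 4 / 120 - (k * r) ^ 6 / 840 + (k * r) ^ 7 / 2520)|
        ≤ C * r ^ 8 := by
  have hpi := Real.pi_pos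
  refine ⟨20 * k^9 / (4 * Real.pi), by positivity, 1 / k, by positivity, fun r hr hrd => ?_⟩
  have ht : 0 < k * r := by positivity
  have ht1 : k * r ≤ 1 := by
    rw [lt_div_iff₀ hk] at hrd
    linarith
  have h := main_aux ht ht1
  have e : Real.cos (k * r) / (4 * Real.pi * r) -
          (1 / (4 * Real.pi)) * (Real.exp (-(k * r)) / r) *
            (1 + 2 * (k * r) + (k * r) ^ 2 + 1 / 6 * (k * r) ^ 3) -
        k / (4 * Real.pi) *
          (-1 + (k * r) ^ 4 / 120 - (k * r) ^ 6 / 840 + (k * r) ^ 7 / 2520)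
      = (Real.cos (k * r) - Real.exp (-(k * r)) *
          (1 + 2 * (k * r) + (k * r) ^ 2 + 1 / 6 * (k * r) ^ 3)
        - k * r * (-1 + (k * r) ^ 4 / 120 - (k * r) ^ 6 / 840 + (k * r) ^ 7 / 2520))
        / (4 * Real.pi * r) := by
    field_simp
  have hp : 0 < 4 * Real.pi * r := by positivity
  rw [e, abs_div, abs_of_pos hp, div_le_iff₀ hp]
  refine h.trans (le_of_eq ?_)
  field_simp
end

section
/- For every integer n ≥ 1 and all reals r > 0, k > 0, ∫_{−∞}^{∞} e^{−r² e^t / 4} · (1/(8π^{3/2})) e^{−k² e^{−t} + t/2} (Σ_{j=0}^{n−1} (2k² e^{−t})^j / j!) dt = g_n(r,k), i.e. the non-oscillatory component g_n admits the integral representation g_n(r,k) = ∫_{−∞}^{∞} e^{−r² e^t/4} w_n(k,t) dt with w_n(k,t) = (1/(8π^{3/2})) e^{−k² e^{−t} + t/2} Σ_{j=0}^{n−1} (2k² e^{−t})^j / j!. -/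
/-- The weight `w_n(k,t) = (1/(8π^{3/2})) e^{-k² e^{-t} + t/2} ∑_{j=0}^{n-1} (2k² e^{-t})^j / j!`. -/
noncomputable def helmholtzW3 (n : ℕ) (k t : ℝ) : ℝ :=
  (1 / (8 * Real.pi ^ ((3 : ℝ) / 2))) * Real.exp (-(k ^ 2 * Real.exp (-t)) + t / 2) *
    ∑ j ∈ Finset.range n, (2 * k ^ 2 * Real.exp (-t)) ^ j / (Nat.factorial j : ℝ)

open MeasureTheory in
lemma hg_integrable (p q s : ℝ) (hp : 0 < p) (hq : 0 < q) :
    Integrable (fun t : ℝ => Real.exp (-(p ^ 2 * Real.exp t) - q ^ 2 * Real.exp (-t) + s * t)) := by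
  obtain ⟨c, hc, hcp, hcq⟩ : ∃ c : ℝ, 0 < c ∧ c ≤ p ^ 2 ∧ c ≤ q ^ 2 :=
    ⟨min (p ^ 2) (q ^ 2), lt_min (by positivity) (by positivity), min_le_left _ _, min_le_right _ _⟩
  have hg := (integrable_exp_neg_mul_sq (b := c / 4) (by positivity)).const_mul
    (Real.exp (s ^ 2 / c))
  refine hg.mono' (by fun_prop) (Filter.Eventually.of_forall fun t => ?_)
  rw [Real.norm_eq_abs, abs_of_pos (Real.exp_pos _), ← Real.exp_add, Real.exp_le_exp]
  have h1 : t ^ 2 / 2 ≤ Real.exp t + Real.exp (-t) := by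
    rcases le_total 0 t with ht | ht
    · have := Real.quadratic_le_exp_of_nonneg ht
      have := Real.exp_pos (-t)
      linarith
    · have := Real.quadratic_le_exp_of_nonneg (neg_nonneg.2 ht)
      have := Real.exp_pos t
      nlinarith
  have h2 := mul_le_mul_of_nonneg_right hcp (Real.exp_pos t).le
  have h3 := mul_le_mul_of_nonneg_right hcq (Real.exp_pos (-t)).le
  have h4 := mul_le_mul_of_nonneg_left h1 hc.le
  have h5 : s ^ 2 / c - s * t + c / 4 * t ^ 2 = (s - c * t / 2) ^ 2 / c := by
    field_simp
    ring
  have h6 : 0 ≤ (s - c * t / 2) ^ 2 / c := by positivity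
  nlinarith

noncomputable def hgJ (p q s : ℝ) : ℝ :=
  ∫ t : ℝ, Real.exp (-(p ^ 2 * Real.exp t) - q ^ 2 * Real.exp (-t) + s * t)

open MeasureTheory in
lemma hgJ_rec (p q s : ℝ) (hp : 0 < p) (hq : 0 < q) :
    q ^ 2 * hgJ p q (s - 1) = p ^ 2 * hgJ p q (s + 1) - s * hgJ p q s := by
  have i0 := (hg_integrable p q s hp hq)
  have i1 := (hg_integrable p q (s + 1) hp hq)
  have i2 := (hg_integrable p q (s - 1) hp hq)
  have hI := ((i2.const_mul (q ^ 2)).sub (i1.const_mul (p ^ 2))).add (i0.const_mul s)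
  have h := integral_eq_zero_of_hasDerivAt_of_integrable (f := fun t : ℝ =>
    Real.exp (-(p ^ 2 * Real.exp t) - q ^ 2 * Real.exp (-t) + s * t)) ?_ hI i0
  · rw [integral_add' ((i2.const_mul (q ^ 2)).sub (i1.const_mul (p ^ 2))) (i0.const_mul s),
      integral_sub' (i2.const_mul (q ^ 2)) (i1.const_mul (p ^ 2)),
      integral_const_mul, integral_const_mul, integral_const_mul] at h
    unfold hgJ
    linarith
  · intro t
    have h1 : HasDerivAt (fun t : ℝ => Real.exp (-t)) (Real.exp (-t) * (-1)) t :=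
      (hasDerivAt_neg t).exp
    have h2 := ((((Real.hasDerivAt_exp t).const_mul (p ^ 2)).neg.sub
      (h1.const_mul (q ^ 2))).add ((hasDerivAt_id t).const_mul s)).exp
    refine h2.congr_deriv ?_
    simp only [Pi.add_apply, Pi.sub_apply, Pi.neg_apply, id]
    rw [show -(p ^ 2 * Real.exp t) - q ^ 2 * Real.exp (-t) + (s - 1) * t =
      (-(p ^ 2 * Real.exp t) - q ^ 2 * Real.exp (-t) + s * t) + (-t) by ring,
      show -(p ^ 2 * Real.exp t) - q ^ 2 * Real.exp (-t) + (s + 1) * t =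
      (-(p ^ 2 * Real.exp t) - q ^ 2 * Real.exp (-t) + s * t) + t by ring]
    simp only [Real.exp_add _ (-t), Real.exp_add _ t]
    ring

open MeasureTheory in
lemma hgJ_symm (p q : ℝ) (hp : 0 < p) (hq : 0 < q) :
    q * hgJ p q (-(1 / 2)) = p * hgJ p q (1 / 2) := by
  have h := integral_sub_left_eq_self (fun t : ℝ =>
    Real.exp (-(p ^ 2 * Real.exp t) - q ^ 2 * Real.exp (-t) + (1 / 2) * t)) volume
    (2 * Real.log (q / p))
  unfold hgJ
  rw [← h, ← integral_const_mul, ← integral_const_mul]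
  congr 1
  ext t
  have e : Real.exp (Real.log (q / p)) = q / p := Real.exp_log (by positivity)
  have e1 : Real.exp (2 * Real.log (q / p) - t) = q ^ 2 / p ^ 2 * Real.exp (-t) := by
    rw [sub_eq_add_neg, Real.exp_add, two_mul, Real.exp_add, e]
    field_simp
  have e2 : Real.exp (-(2 * Real.log (q / p) - t)) = p ^ 2 / q ^ 2 * Real.exp t := by
    rw [Real.exp_neg, e1, Real.exp_neg]
    field_simp
  have e3 : 1 / 2 * (2 * Real.log (q / p) - t) = Real.log (q / p) + -(1 / 2) * t := by ring
  rw [e1, e2, e3, Real.exp_add, Real.exp_add, Real.exp_add (Real.log _), e,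
    show -(p ^ 2 * (q ^ 2 / p ^ 2 * Real.exp (-t))) - q ^ 2 * (p ^ 2 / q ^ 2 * Real.exp t) =
      -(p ^ 2 * Real.exp t) - q ^ 2 * Real.exp (-t) by field_simp; ring]
  field_simp

open MeasureTheory in
lemma hgJ_sum (p q : ℝ) (hp : 0 < p) (hq : 0 < q) :
    p * hgJ p q (1 / 2) + q * hgJ p q (-(1 / 2)) =
      2 * (Real.exp (-(2 * p * q)) * Real.sqrt Real.pi) := by
  set u : ℝ → ℝ := fun t => p * Real.exp (1 / 2 * t) - q * Real.exp (-(1 / 2) * t) with hu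
  set u' : ℝ → ℝ := fun t => (p * Real.exp (1 / 2 * t) + q * Real.exp (-(1 / 2) * t)) / 2 with hu'
  have hd : ∀ t, HasDerivAt u (u' t) t := by
    intro t
    have h1 := (((hasDerivAt_id t).const_mul (1 / 2 : ℝ)).exp).const_mul p
    have h2 := (((hasDerivAt_id t).const_mul (-(1 / 2) : ℝ)).exp).const_mul q
    refine (h1.sub h2).congr_deriv ?_
    simp only [hu', id]
    ring
  have hpos : ∀ t, 0 < u' t := fun t => by simp only [hu']; positivity
  have hmono : StrictMono u := strictMono_of_deriv_pos fun t => by rw [(hd t).deriv]; exact hpos t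
  have hcont : Continuous u := by fun_prop
  have htop : Filter.Tendsto u Filter.atTop Filter.atTop := by
    have h1 : Filter.Tendsto (fun t : ℝ => p * Real.exp (1 / 2 * t)) Filter.atTop Filter.atTop :=
      (Real.tendsto_exp_atTop.comp (Filter.tendsto_id.const_mul_atTop (by norm_num))).const_mul_atTop hp
    have h2 : Filter.Tendsto (fun t : ℝ => -(q * Real.exp (-(1 / 2) * t))) Filter.atTop
        (nhds (-(q * 0))) :=
      ((Real.tendsto_exp_atBot.comp
        (Filter.tendsto_id.const_mul_atTop_of_neg (by norm_num))).const_mul q).neg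
    simpa [hu, sub_eq_add_neg] using h1.atTop_add h2
  have hbot : Filter.Tendsto u Filter.atBot Filter.atBot := by
    have h1 : Filter.Tendsto (fun t : ℝ => -(q * Real.exp (-(1 / 2) * t))) Filter.atBot
        Filter.atBot :=
      Filter.tendsto_neg_atTop_atBot.comp ((Real.tendsto_exp_atTop.comp
        (Filter.tendsto_id.const_mul_atBot_of_neg (by norm_num))).const_mul_atTop hq)
    have h2 : Filter.Tendsto (fun t : ℝ => p * Real.exp ((1 / 2) * t)) Filter.atBot
        (nhds (p * 0)) :=
      ((Real.tendsto_exp_atBot.comp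
        (Filter.tendsto_id.const_mul_atBot (by norm_num))).const_mul p)
    simpa [hu, sub_eq_add_neg, add_comm] using h1.atBot_add h2
  have hsurj : Function.Surjective u := hcont.surjective htop hbot
  have h := integral_image_eq_integral_abs_deriv_smul (s := Set.univ) MeasurableSet.univ
    (fun t _ => (hd t).hasDerivWithinAt) hmono.injective.injOn (fun x => Real.exp (-1 * x ^ 2))
  rw [Set.image_univ, hsurj.range_eq, setIntegral_univ, setIntegral_univ, integral_gaussian,
    div_one] at h
  have i1 := (hg_integrable p q (1 / 2) hp hq).const_mul p
  have i2 := (hg_integrable p q (-(1 / 2)) hp hq).const_mul q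
  rw [h, ← integral_const_mul, ← integral_const_mul]
  unfold hgJ
  rw [← integral_const_mul, ← integral_const_mul, ← integral_add i1 i2]
  congr 1
  ext t
  have hsq : -(2 * p * q) + -1 * u t ^ 2 = -(p ^ 2 * Real.exp t) - q ^ 2 * Real.exp (-t) := by
    simp only [hu]
    have a1 : Real.exp t = Real.exp (1 / 2 * t) ^ 2 := by
      rw [← Real.exp_nat_mul]; congr 1; push_cast; ring
    have a2 : Real.exp (-t) = Real.exp (-(1 / 2) * t) ^ 2 := by
      rw [← Real.exp_nat_mul]; congr 1; push_cast; ring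
    have a3 : Real.exp (1 / 2 * t) * Real.exp (-(1 / 2) * t) = 1 := by
      rw [← Real.exp_add, ← Real.exp_zero]; congr 1; ring
    rw [a1, a2]
    linear_combination 2 * p * q * a3
  rw [abs_of_pos (hpos t), smul_eq_mul, mul_left_comm (Real.exp _) (u' t), ← Real.exp_add, hsq,
    Real.exp_add, Real.exp_add]
  simp only [hu']
  ring

/-- coefficients of the reverse Bessel polynomials -/
noncomputable def hgc (m d : ℕ) : ℝ :=
  (Nat.factorial (m + 2 * d) : ℝ) / (Nat.factorial m * Nat.factorial d * 2 ^ d)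

noncomputable def hgTheta (n : ℕ) (z : ℝ) : ℝ :=
  ∑ m ∈ Finset.range (n + 1), hgc m (n - m) * z ^ m

lemma hgc_zero (m : ℕ) : hgc m 0 = 1 := by
  unfold hgc
  have := Nat.factorial_ne_zero m
  simp [this]

lemma hgc_rec (m e : ℕ) :
    hgc (m + 2) (e + 1) = (2 * m + 2 * e + 5) * hgc (m + 2) e + hgc m (e + 1) := by
  unfold hgc
  rw [show m + 2 + 2 * (e + 1) = m + 2 * e + 1 + 1 + 1 + 1 by ring,
    show m + 2 + 2 * e = m + 2 * e + 1 + 1 by ring,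
    show m + 2 * (e + 1) = m + 2 * e + 1 + 1 by ring]
  simp only [Nat.factorial_succ]
  have h1 := Nat.factorial_ne_zero m
  have h2 := Nat.factorial_ne_zero e
  push_cast
  field_simp
  ring

lemma hgc_zero_rec (e : ℕ) : hgc 0 (e + 1) = (2 * e + 1) * hgc 0 e := by
  unfold hgc
  rw [show 0 + 2 * (e + 1) = 0 + 2 * e + 1 + 1 by ring]
  simp only [Nat.factorial_succ]
  have h2 := Nat.factorial_ne_zero e
  push_cast
  field_simp
  ring

lemma hgc_one_rec (e : ℕ) : hgc 1 (e + 1) = (2 * e + 3) * hgc 1 e := by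
  unfold hgc
  rw [show 1 + 2 * (e + 1) = 1 + 2 * e + 1 + 1 by ring]
  simp only [Nat.factorial_succ]
  have h2 := Nat.factorial_ne_zero e
  push_cast
  field_simp
  ring

lemma hgTheta_rec (N : ℕ) (z : ℝ) :
    hgTheta (N + 2) z = (2 * N + 3) * hgTheta (N + 1) z + z ^ 2 * hgTheta N z := by
  unfold hgTheta
  rw [Finset.sum_range_succ' _ (N + 2), Finset.sum_range_succ' _ (N + 1),
    Finset.sum_range_succ _ N, Finset.sum_range_succ' _ (N + 1), Finset.sum_range_succ' _ N,
    Finset.sum_range_succ _ N]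
  have hs : ∑ x ∈ Finset.range N, hgc (x + 1 + 1) (N + 2 - (x + 1 + 1)) * z ^ (x + 1 + 1) =
      (2 * N + 3) * ∑ x ∈ Finset.range N, hgc (x + 1 + 1) (N + 1 - (x + 1 + 1)) * z ^ (x + 1 + 1)
      + z ^ 2 * ∑ x ∈ Finset.range N, hgc x (N - x) * z ^ x := by
    rw [Finset.mul_sum, Finset.mul_sum, ← Finset.sum_add_distrib]
    refine Finset.sum_congr rfl fun m hm => ?_
    obtain ⟨e, rfl⟩ := Nat.exists_eq_add_of_lt (Finset.mem_range.1 hm)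
    rw [show m + e + 1 + 2 - (m + 1 + 1) = e + 1 by omega,
      show m + e + 1 + 1 - (m + 1 + 1) = e by omega, show m + e + 1 - m = e + 1 by omega,
      hgc_rec]
    push_cast
    ring
  rw [hs]
  rw [show N + 2 - (N + 1 + 1) = 0 by omega, show N + 2 - (0 + 1) = N + 1 by omega,
    show N + 1 - (0 + 1) = N by omega, Nat.sub_self, Nat.sub_zero, Nat.sub_zero,
    hgc_zero, hgc_zero, zero_add, hgc_one_rec, hgc_zero_rec (N + 1)]
  push_cast
  ring

lemma hgJ_zero (p q : ℝ) (hp : 0 < p) (hq : 0 < q) :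
    hgJ p q (1 / 2) = Real.exp (-(2 * p * q)) * Real.sqrt Real.pi / p := by
  rw [eq_div_iff hp.ne']
  linarith [hgJ_sum p q hp hq, hgJ_symm p q hp hq]

lemma hgJ_succ (p q : ℝ) (hp : 0 < p) (hq : 0 < q) (n : ℕ) :
    (2 * q ^ 2) ^ (n + 1) * hgJ p q (1 / 2 - (n + 1 : ℕ)) =
      hgJ p q (1 / 2) * ((2 * p * q) * hgTheta n (2 * p * q)) := by
  induction n using Nat.twoStepInduction with
  | zero =>
    have h := hgJ_symm p q hp hq
    simp [hgTheta, hgc_zero]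
    rw [show (2 : ℝ)⁻¹ - 1 = -(1 / 2) by norm_num, show (2 : ℝ)⁻¹ = 1 / 2 by norm_num]
    linear_combination 2 * q * h
  | one =>
    have h := hgJ_symm p q hp hq
    have h2 := hgJ_rec p q (-(1 / 2)) hp hq
    have ht : hgTheta 1 (2 * p * q) = 1 + 2 * p * q := by
      simp [hgTheta, Finset.sum_range_succ, hgc]
    rw [ht]
    rw [show (1 : ℝ) / 2 - ((1 + 1 : ℕ) : ℝ) = -(1 / 2) - 1 by norm_num]
    rw [show -(1 / 2 : ℝ) + 1 = 1 / 2 by norm_num] at h2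
    linear_combination 4 * q ^ 2 * h2 + 2 * q * h
  | more n ih1 ih2 =>
    have h2 := hgJ_rec p q (1 / 2 - (n + 1 + 1 : ℕ)) hp hq
    rw [hgTheta_rec]
    rw [show (1 : ℝ) / 2 - (n + 1 + 1 : ℕ) - 1 = 1 / 2 - (n + 2 + 1 : ℕ) by push_cast; ring,
      show (1 : ℝ) / 2 - (n + 1 + 1 : ℕ) + 1 = 1 / 2 - (n + 1 : ℕ) by push_cast; ring] at h2
    push_cast at *
    linear_combination 2 * (2 * q ^ 2) ^ (n + 2) * h2 + (2 * n + 3) * ih2 +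
      4 * p ^ 2 * q ^ 2 * ih1

lemma hg_coeff (n : ℕ) (z : ℝ) :
    (1 / (2 ^ (n + 1 - 1) * (Nat.factorial (n + 1) : ℝ))) *
        ∑ m ∈ Finset.range (n + 1),
          ((Nat.factorial (2 * (n + 1) - m - 2) : ℝ) * 2 ^ m) /
              ((Nat.factorial m : ℝ) * (Nat.factorial (n + 1 - m - 1) : ℝ)) *
            z ^ (m + 1) = z * hgTheta n z / (Nat.factorial (n + 1) : ℝ) := by
  unfold hgTheta hgc
  rw [Finset.mul_sum, Finset.mul_sum, Finset.sum_div]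
  refine Finset.sum_congr rfl fun m hm => ?_
  obtain ⟨d, rfl⟩ := Nat.exists_eq_add_of_le (Nat.lt_succ_iff.1 (Finset.mem_range.1 hm))
  rw [show 2 * (m + d + 1) - m - 2 = m + 2 * d by omega, show m + d + 1 - m - 1 = d by omega,
    show m + d + 1 - 1 = m + d by omega, show m + d - m = d by omega]
  have h1 := Nat.factorial_ne_zero m
  have h2 := Nat.factorial_ne_zero d
  have h3 := Nat.factorial_ne_zero (m + d + 1)
  field_simp
  ring

/-- For every integer `n ≥ 1` and all reals `r > 0`, `k > 0`,
the non-oscillatory component has the Gaussian integral representation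
`g_n(r,k) = ∫_{-∞}^{∞} e^{-r² e^t/4} w_n(k,t) dt`. -/
theorem helmholtzG3_gaussian_representation (n : ℕ) (hn : 1 ≤ n) (r k : ℝ)
    (hr : 0 < r) (hk : 0 < k) :
    ∫ t : ℝ, Real.exp (-(r ^ 2 * Real.exp t / 4)) * helmholtzW3 n k t =
      helmholtzG3 n r k := by
  have hp : 0 < r / 2 := by positivity
  have hInt : ∀ j ∈ Finset.range n, MeasureTheory.Integrable (fun t : ℝ =>
      ((1 / (8 * Real.pi ^ ((3 : ℝ) / 2))) * ((2 * k ^ 2) ^ j / (Nat.factorial j : ℝ))) *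
      Real.exp (-((r / 2) ^ 2 * Real.exp t) - k ^ 2 * Real.exp (-t) + (1 / 2 - (j : ℝ)) * t)) :=
    fun j _ => (hg_integrable (r / 2) k (1 / 2 - j) hp hk).const_mul _
  have heq : ∀ t : ℝ, Real.exp (-(r ^ 2 * Real.exp t / 4)) * helmholtzW3 n k t =
      ∑ j ∈ Finset.range n,
      ((1 / (8 * Real.pi ^ ((3 : ℝ) / 2))) * ((2 * k ^ 2) ^ j / (Nat.factorial j : ℝ))) *
      Real.exp (-((r / 2) ^ 2 * Real.exp t) - k ^ 2 * Real.exp (-t) + (1 / 2 - (j : ℝ)) * t) := by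
    intro t
    unfold helmholtzW3
    rw [Finset.mul_sum, Finset.mul_sum]
    refine Finset.sum_congr rfl fun j _ => ?_
    rw [show -((r / 2) ^ 2 * Real.exp t) - k ^ 2 * Real.exp (-t) + (1 / 2 - (j : ℝ)) * t =
      -(r ^ 2 * Real.exp t / 4) + (-(k ^ 2 * Real.exp (-t)) + t / 2) + j * (-t) by ring,
      Real.exp_add _ ((j : ℝ) * (-t)), Real.exp_nat_mul, mul_pow _ (Real.exp (-t)),
      Real.exp_add (-(r ^ 2 * Real.exp t / 4))]
    ring
  simp_rw [heq]
  rw [MeasureTheory.integral_finsetSum _ hInt]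
  simp_rw [MeasureTheory.integral_const_mul]
  change ∑ j ∈ Finset.range n, ((1 / (8 * Real.pi ^ ((3 : ℝ) / 2))) *
    ((2 * k ^ 2) ^ j / (Nat.factorial j : ℝ))) * hgJ (r / 2) k (1 / 2 - (j : ℝ)) = _
  obtain ⟨N, rfl⟩ := Nat.exists_eq_add_of_le' hn
  unfold helmholtzG3
  rw [Finset.sum_range_succ', Finset.sum_Ico_eq_sum_range, Nat.add_sub_cancel]
  simp_rw [add_comm 1, hg_coeff]
  have hz : 2 * (r / 2) * k = k * r := by ring
  have h0 : (1 / (8 * Real.pi ^ ((3 : ℝ) / 2))) * hgJ (r / 2) k (1 / 2) =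
      (1 / (4 * Real.pi)) * (Real.exp (-(k * r)) / r) := by
    rw [hgJ_zero _ _ hp hk, hz, show (3 : ℝ) / 2 = 1 + 1 / 2 by norm_num,
      Real.rpow_add Real.pi_pos, Real.rpow_one, ← Real.sqrt_eq_rpow]
    have := Real.sqrt_pos.2 Real.pi_pos
    have := Real.pi_pos
    field_simp
    norm_num
  rw [← h0, mul_add, Finset.mul_sum, add_comm (_ * 1)]
  congr 1
  · refine Finset.sum_congr rfl fun j _ => ?_
    have h := hgJ_succ (r / 2) k hp hk j
    rw [hz] at h
    linear_combination (1 / (8 * Real.pi ^ ((3 : ℝ) / 2))) / (Nat.factorial (j + 1) : ℝ) * h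
  · simp
end

section
/- For every integer j ≥ 0 and all reals r > 0, k > 0, one has (2k²)^j ∫_0^∞ p J₀(pr)/(p² + k²)^{j+1} dp = ((kr)^j / j!) K_j(kr). Consequently, for every integer n ≥ 1, the 2D inverse Fourier transform of ĝ_n satisfies h_n(r,k) = (1/(2π)) Σ_{j=0}^{n−1} ∫_0^∞ (2k²)^j/(p² + k²)^{j+1} J₀(pr) p dp = (1/(2π)) Σ_{j=0}^{n−1} ((kr)^j / j!) K_j(kr). -/
/-- The Bessel function of the first kind of order zero,
`J₀(x) = (1/π) ∫_0^π cos(x sin θ) dθ`. -/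
noncomputable def besselJ0 (x : ℝ) : ℝ :=
  (1 / Real.pi) * ∫ θ in (0 : ℝ)..Real.pi, Real.cos (x * Real.sin θ)

/-- The modified Bessel function of the second kind of integer order `j`,
`K_j(x) = ∫_0^∞ e^{-x cosh t} cosh(jt) dt`. -/
noncomputable def besselK (j : ℕ) (x : ℝ) : ℝ :=
  ∫ t in Set.Ioi (0 : ℝ), Real.exp (-(x * Real.cosh t)) * Real.cosh ((j : ℝ) * t)

open MeasureTheory Set

lemma besselJ0_continuous : Continuous besselJ0 := by
  unfold besselJ0
  refine continuous_const.mul ?_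
  exact intervalIntegral.continuous_parametric_intervalIntegral_of_continuous' (by fun_prop) _ _

lemma besselJ0_half (x : ℝ) :
    ∫ θ in (0 : ℝ)..Real.pi, Real.cos (x * Real.sin θ) =
      2 * ∫ θ in (0 : ℝ)..(Real.pi / 2), Real.cos (x * Real.sin θ) := by
  have hc : Continuous fun θ : ℝ => Real.cos (x * Real.sin θ) := by fun_prop
  rw [← intervalIntegral.integral_add_adjacent_intervals (b := Real.pi / 2)
    (hc.intervalIntegrable _ _) (hc.intervalIntegrable _ _)]
  have h := intervalIntegral.integral_comp_sub_left (a := 0) (b := Real.pi / 2)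
    (fun θ : ℝ => Real.cos (x * Real.sin θ)) Real.pi
  simp only [Real.sin_pi_sub, sub_zero] at h
  rw [show Real.pi - Real.pi / 2 = Real.pi / 2 by ring] at h
  rw [← h]; ring

lemma besselJ0_full (x : ℝ) :
    ∫ θ in Ioo (-Real.pi) Real.pi, Real.cos (x * Real.sin θ) = 2 * Real.pi * besselJ0 x := by
  have hc : Continuous fun θ : ℝ => Real.cos (x * Real.sin θ) := by fun_prop
  rw [← integral_Ioc_eq_integral_Ioo,
    ← intervalIntegral.integral_of_le (by linarith [Real.pi_pos]),
    ← intervalIntegral.integral_add_adjacent_intervals (b := 0)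
    (hc.intervalIntegrable _ _) (hc.intervalIntegrable _ _)]
  have h := intervalIntegral.integral_comp_neg (a := -Real.pi) (b := 0)
    (fun θ : ℝ => Real.cos (x * Real.sin θ))
  simp only [Real.sin_neg, mul_neg, Real.cos_neg, neg_neg, neg_zero] at h
  rw [h]
  unfold besselJ0
  have := Real.pi_pos
  field_simp
  ring

lemma besselJ0_abs_le_one (x : ℝ) : |besselJ0 x| ≤ 1 := by
  have h := intervalIntegral.norm_integral_le_of_norm_le_const (a := 0) (b := Real.pi) (C := 1)
    (f := fun θ : ℝ => Real.cos (x * Real.sin θ)) (fun θ _ => Real.abs_cos_le_one _)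
  rw [sub_zero, abs_of_pos Real.pi_pos, one_mul, Real.norm_eq_abs] at h
  unfold besselJ0
  rw [abs_mul, abs_of_pos (by positivity)]
  have := Real.pi_pos
  rw [one_div, inv_mul_le_iff₀ this]; linarith

lemma osc_part (x a : ℝ) (hx : 0 < x) (ha : 0 ≤ a) (ha' : a < Real.pi / 2) :
    |∫ θ in (0 : ℝ)..a, Real.cos (x * Real.sin θ)| ≤ 2 / (x * Real.cos a) := by
  have hcos : ∀ θ ∈ uIcc 0 a, 0 < Real.cos θ := by
    intro θ hθ
    rw [uIcc_of_le ha] at hθ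
    exact Real.cos_pos_of_mem_Ioo ⟨by linarith [hθ.1, Real.pi_pos], by linarith [hθ.2]⟩
  have hca : 0 < Real.cos a := hcos a (by simp)
  have hcF : ContinuousOn (fun θ : ℝ => Real.sin (x * Real.sin θ) * Real.sin θ /
      (x * Real.cos θ ^ 2)) (uIcc 0 a) := by
    refine ContinuousOn.div (by fun_prop) (by fun_prop) ?_
    intro θ hθ; have := hcos θ hθ; positivity
  have hcG : ContinuousOn (fun θ : ℝ => Real.sin θ /
      (x * Real.cos θ ^ 2)) (uIcc 0 a) := by
    refine ContinuousOn.div (by fun_prop) (by fun_prop) ?_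
    intro θ hθ; have := hcos θ hθ; positivity
  have hc : Continuous fun θ : ℝ => Real.cos (x * Real.sin θ) := by fun_prop
  have hF : ∫ θ in (0 : ℝ)..a, (Real.cos (x * Real.sin θ) +
      Real.sin (x * Real.sin θ) * Real.sin θ / (x * Real.cos θ ^ 2)) =
      Real.sin (x * Real.sin a) / (x * Real.cos a) -
        Real.sin (x * Real.sin 0) / (x * Real.cos 0) := by
    refine intervalIntegral.integral_eq_sub_of_hasDerivAt
      (f := fun θ => Real.sin (x * Real.sin θ) / (x * Real.cos θ)) ?_ ?_
    · intro θ hθ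
      have h0 := hcos θ hθ
      have h1 := (((Real.hasDerivAt_sin θ).const_mul x).sin).div
        ((Real.hasDerivAt_cos θ).const_mul x) (by positivity)
      refine h1.congr_deriv ?_
      field_simp
      ring
    · exact (hc.intervalIntegrable _ _).add hcF.intervalIntegrable
  have hG : ∫ θ in (0 : ℝ)..a, Real.sin θ / (x * Real.cos θ ^ 2) =
      1 / (x * Real.cos a) - 1 / (x * Real.cos 0) := by
    refine intervalIntegral.integral_eq_sub_of_hasDerivAt
      (f := fun θ => 1 / (x * Real.cos θ)) ?_ ?_
    · intro θ hθ
      have h0 := hcos θ hθ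
      have h1 := (hasDerivAt_const θ (1 : ℝ)).div
        ((Real.hasDerivAt_cos θ).const_mul x) (by positivity)
      refine h1.congr_deriv ?_
      field_simp
      ring
    · exact hcG.intervalIntegrable
  rw [intervalIntegral.integral_add (hc.intervalIntegrable _ _) hcF.intervalIntegrable] at hF
  have hle := intervalIntegral.norm_integral_le_of_norm_le (μ := volume)
    (f := fun θ : ℝ => Real.sin (x * Real.sin θ) * Real.sin θ / (x * Real.cos θ ^ 2))
    (g := fun θ : ℝ => Real.sin θ / (x * Real.cos θ ^ 2)) ha
    (Filter.Eventually.of_forall fun θ hθ => by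
      have h0 := hcos θ (by rw [uIcc_of_le ha]; exact Ioc_subset_Icc_self hθ)
      have hs : 0 ≤ Real.sin θ := Real.sin_nonneg_of_nonneg_of_le_pi hθ.1.le
        (by linarith [hθ.2, Real.pi_pos])
      rw [Real.norm_eq_abs, abs_div, abs_mul, abs_of_nonneg hs,
        abs_of_pos (show 0 < x * Real.cos θ ^ 2 by positivity)]
      gcongr
      exact mul_le_of_le_one_left hs (Real.abs_sin_le_one _)) hcG.intervalIntegrable
  rw [hG, Real.norm_eq_abs] at hle
  simp only [Real.sin_zero, mul_zero, zero_div, sub_zero, Real.cos_zero, mul_one] at hF hle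
  have hb : |Real.sin (x * Real.sin a) / (x * Real.cos a)| ≤ 1 / (x * Real.cos a) := by
    rw [abs_div, abs_of_pos (show 0 < x * Real.cos a by positivity)]
    gcongr
    exact Real.abs_sin_le_one _
  have hx' : 0 < 1 / x := by positivity
  have h2 : 2 / (x * Real.cos a) = 1 / (x * Real.cos a) + 1 / (x * Real.cos a) := by ring
  rw [h2]
  rw [abs_le] at *
  constructor <;> linarith

lemma besselJ0_decay (x : ℝ) (hx : 0 < x) : |besselJ0 x| ≤ 3 / √x := by
  have hpi := Real.pi_gt_three
  rcases le_or_gt x 1 with h1 | h1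
  · refine (besselJ0_abs_le_one x).trans ?_
    have : √x ≤ 1 := Real.sqrt_le_one.mpr h1
    rw [le_div_iff₀ (Real.sqrt_pos.mpr hx)]; linarith
  set y := √x with hy
  have hy1 : 1 ≤ y := Real.one_le_sqrt.mpr h1.le
  have hy0 : 0 < y := by linarith
  have hxy : x = y * y := (Real.mul_self_sqrt hx.le).symm
  have hi : 1 / y ≤ 1 := by rw [div_le_one hy0]; exact hy1
  have hi0 : 0 < 1 / y := by positivity
  have hA := osc_part x (Real.pi / 2 - 1 / y) hx (by linarith) (by linarith)
  rw [Real.cos_pi_div_two_sub] at hA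
  have hs := Real.mul_le_sin hi0.le (by linarith)
  have hA2 : 2 / (x * Real.sin (1 / y)) ≤ Real.pi / y := by
    calc 2 / (x * Real.sin (1 / y)) ≤ 2 / (x * (2 / Real.pi * (1 / y))) := by gcongr
      _ = Real.pi / y := by rw [hxy]; field_simp
  have hB := intervalIntegral.norm_integral_le_of_norm_le_const
    (a := Real.pi / 2 - 1 / y) (b := Real.pi / 2) (C := 1)
    (f := fun θ : ℝ => Real.cos (x * Real.sin θ)) (fun θ _ => Real.abs_cos_le_one _)
  rw [show Real.pi / 2 - (Real.pi / 2 - 1 / y) = 1 / y by ring, abs_of_pos hi0, one_mul,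
    Real.norm_eq_abs] at hB
  have hc : Continuous fun θ : ℝ => Real.cos (x * Real.sin θ) := by fun_prop
  unfold besselJ0
  rw [besselJ0_half, ← intervalIntegral.integral_add_adjacent_intervals
    (b := Real.pi / 2 - 1 / y) (hc.intervalIntegrable _ _) (hc.intervalIntegrable _ _),
    abs_mul, abs_mul, abs_of_pos (show (0 : ℝ) < 1 / Real.pi by positivity), abs_two]
  have hC := abs_add_le (∫ θ in (0 : ℝ)..(Real.pi / 2 - 1 / y), Real.cos (x * Real.sin θ))
    (∫ θ in (Real.pi / 2 - 1 / y)..(Real.pi / 2), Real.cos (x * Real.sin θ))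
  calc _ ≤ 1 / Real.pi * (2 * (Real.pi / y + 1 / y)) := by gcongr; linarith
    _ ≤ 3 / y := by
      rw [← sub_nonneg]
      have : 3 / y - 1 / Real.pi * (2 * (Real.pi / y + 1 / y)) = (Real.pi - 2) / (Real.pi * y) := by
        field_simp; ring
      rw [this]
      have : 0 < Real.pi - 2 := by linarith
      positivity

lemma gauss_cos (s r : ℝ) (hs : 0 < s) :
    ∫ y : ℝ, Real.exp (-s * y ^ 2) * Real.cos (r * y) =
      √(Real.pi / s) * Real.exp (-(r ^ 2 / (4 * s))) := by
  have h := fourierIntegral_gaussian (b := (s : ℂ)) (by simpa using hs) (r : ℂ)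
  have hint : Integrable (fun x : ℝ => Complex.exp (Complex.I * r * x) *
      Complex.exp (-(s : ℂ) * x ^ 2)) := by
    have := GaussianFourier.integrable_cexp_neg_mul_sq_add_real_mul_I
      (b := (s : ℂ)) (by simpa using hs) 0
    refine ((integrable_exp_neg_mul_sq hs).ofReal (𝕜 := ℂ)).bdd_mul (c := 1)
      (f := fun x : ℝ => Complex.exp (Complex.I * r * x)) (by fun_prop) ?_ |>.congr ?_
    · refine Filter.Eventually.of_forall fun x => ?_
      rw [Complex.norm_exp]; simp
    · refine Filter.Eventually.of_forall fun x => ?_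
      simp
  have h2 := congrArg Complex.re h
  have h3 := integral_re hint
  simp only [RCLike.re_eq_complex_re] at h3
  rw [← h3] at h2
  have e1 : ∀ x : ℝ, (Complex.exp (Complex.I * r * x) *
      Complex.exp (-(s : ℂ) * x ^ 2)).re = Real.exp (-s * x ^ 2) * Real.cos (r * x) := by
    intro x
    rw [← Complex.exp_add, Complex.exp_re]
    congr 2
    · simp [← Complex.ofReal_pow]
    · simp [← Complex.ofReal_pow]
  simp only [e1] at h2
  rw [h2, Real.sqrt_eq_rpow]
  have e2 : ((Real.pi : ℂ) / s) ^ (1 / 2 : ℂ) * Complex.exp (-(r : ℂ) ^ 2 / (4 * s)) =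
      (((Real.pi / s) ^ (1 / 2 : ℝ) * Real.exp (-(r ^ 2 / (4 * s))) : ℝ) : ℂ) := by
    push_cast
    rw [Complex.ofReal_cpow (by positivity)]
    push_cast
    congr 2
    ring
  rw [e2, Complex.ofReal_re]

lemma weber (s r : ℝ) (hs : 0 < s) :
    ∫ p in Ioi (0 : ℝ), p * besselJ0 (p * r) * Real.exp (-s * p ^ 2) =
      1 / (2 * s) * Real.exp (-(r ^ 2 / (4 * s))) := by
  have hpi := Real.pi_pos
  have h := integral_comp_polarCoord_symm
    (fun q : ℝ × ℝ => Real.exp (-s * q.1 ^ 2) * (Real.exp (-s * q.2 ^ 2) * Real.cos (r * q.2)))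
  have h2 : ∫ q : ℝ × ℝ, Real.exp (-s * q.1 ^ 2) *
      (Real.exp (-s * q.2 ^ 2) * Real.cos (r * q.2)) =
      Real.pi / s * Real.exp (-(r ^ 2 / (4 * s))) := by
    have := integral_prod_mul (μ := (volume : Measure ℝ)) (ν := (volume : Measure ℝ))
      (fun x : ℝ => Real.exp (-s * x ^ 2))
      (fun y : ℝ => Real.exp (-s * y ^ 2) * Real.cos (r * y))
    rw [Measure.volume_eq_prod, this, integral_gaussian, gauss_cos s r hs, ← mul_assoc,
      Real.mul_self_sqrt (by positivity)]
  rw [h2] at h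
  have e : ∀ q : ℝ × ℝ, q.1 • (Real.exp (-s * (polarCoord.symm q).1 ^ 2) *
      (Real.exp (-s * (polarCoord.symm q).2 ^ 2) * Real.cos (r * (polarCoord.symm q).2))) =
      q.1 * Real.exp (-s * q.1 ^ 2) * Real.cos (q.1 * r * Real.sin q.2) := by
    intro q
    simp only [polarCoord_symm_apply, smul_eq_mul]
    rw [← mul_assoc (Real.exp _), ← Real.exp_add, mul_assoc]
    congr 3
    · have := Real.sin_sq_add_cos_sq q.2
      linear_combination (-s * q.1 ^ 2) * this
    · ring
  simp only [e, polarCoord_target] at h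
  rw [Measure.volume_eq_prod, setIntegral_prod] at h
  · have e3 : ∀ p : ℝ, ∫ y in Ioo (-Real.pi) Real.pi, p * Real.exp (-s * p ^ 2) *
        Real.cos (p * r * Real.sin y) =
        (2 * Real.pi) * (p * besselJ0 (p * r) * Real.exp (-s * p ^ 2)) := by
      intro p
      rw [integral_const_mul, besselJ0_full]; ring
    simp only [e3] at h
    rw [integral_const_mul] at h
    have h5 := congrArg (fun z => z / (2 * Real.pi)) h
    rw [mul_div_cancel_left₀ _ (by positivity)] at h5
    rw [h5]
    field_simp
  · rw [IntegrableOn, ← Measure.prod_restrict]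
    have h1 : Integrable (fun q : ℝ × ℝ => (q.1 * Real.exp (-s * q.1 ^ 2)) * (1 : ℝ))
        ((volume.restrict (Ioi 0)).prod (volume.restrict (Ioo (-Real.pi) Real.pi))) :=
      Integrable.mul_prod (f := fun x : ℝ => x * Real.exp (-s * x ^ 2)) (g := fun _ : ℝ => (1 : ℝ))
        (integrable_mul_exp_neg_mul_sq hs).integrableOn (integrable_const _)
    refine h1.mono (Continuous.aestronglyMeasurable (by fun_prop))
      (Filter.Eventually.of_forall fun q => ?_)
    rw [norm_mul, norm_mul _ (1 : ℝ)]
    gcongr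
    simpa using Real.abs_cos_le_one _

lemma gamma_nat (j : ℕ) (a : ℝ) (ha : 0 < a) :
    ∫ s in Ioi (0 : ℝ), s ^ j * Real.exp (-(a * s)) = (Nat.factorial j : ℝ) / a ^ (j + 1) := by
  have h := Real.integral_rpow_mul_exp_neg_mul_Ioi (a := (j : ℝ) + 1) (r := a) (by positivity) ha
  rw [Real.Gamma_nat_eq_factorial] at h
  simp only [add_sub_cancel_right, Real.rpow_natCast] at h
  rw [h]
  have : (1 / a) ^ ((j : ℝ) + 1) = (1 / a) ^ (j + 1) := by
    rw [← Real.rpow_natCast]; push_cast; rfl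
  rw [this, one_div, inv_pow]
  ring

lemma gamma_nat_integrable (j : ℕ) (a : ℝ) (ha : 0 < a) :
    IntegrableOn (fun s : ℝ => s ^ j * Real.exp (-(a * s))) (Ioi 0) := by
  refine Integrable.of_integral_ne_zero ?_
  rw [gamma_nat j a ha]
  positivity

lemma J_integrable (j : ℕ) (r k : ℝ) (hr : 0 < r) (hk : 0 < k) :
    IntegrableOn (fun p : ℝ => p * besselJ0 (p * r) / (p ^ 2 + k ^ 2) ^ (j + 1)) (Ioi 0) := by
  have h1 : Integrable (fun x : ℝ => ((1 : ℝ) + ‖x‖ ^ 2) ^ (-(3 / 2 : ℝ) / 2)) :=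
    integrable_rpow_neg_one_add_norm_sq (by simp; norm_num)
  set c := min 1 (k ^ 2) with hc
  have hc0 : 0 < c := lt_min one_pos (by positivity)
  have h2 := (h1.const_mul (3 / √r / ((k ^ 2) ^ j * c))).integrableOn (s := Ioi 0)
  refine Integrable.mono' h2 ?_ ?_
  · refine Continuous.aestronglyMeasurable ?_
    have := besselJ0_continuous
    exact Continuous.div (by fun_prop) (by fun_prop) (fun p => by positivity)
  · refine (ae_restrict_mem measurableSet_Ioi).mono fun p hp => ?_
    have hp : 0 < p := hp
    have hD : (k ^ 2) ^ j * c * (1 + p ^ 2) ≤ (p ^ 2 + k ^ 2) ^ (j + 1) := by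
      rw [pow_succ (p ^ 2 + k ^ 2) j, mul_assoc]
      have a1 : c ≤ 1 := min_le_left _ _
      have a2 : c ≤ k ^ 2 := min_le_right _ _
      have a3 : c * (1 + p ^ 2) ≤ p ^ 2 + k ^ 2 := by nlinarith [sq_nonneg p]
      have a4 : k ^ 2 ≤ p ^ 2 + k ^ 2 := by nlinarith [sq_nonneg p]
      exact mul_le_mul (pow_le_pow_left₀ (by positivity) a4 j) a3
        (mul_nonneg hc0.le (by positivity)) (by positivity)
    have hN : p * |besselJ0 (p * r)| ≤ 3 / √r * (1 + p ^ 2) ^ (1 / 4 : ℝ) := by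
      have b1 := besselJ0_decay (p * r) (by positivity)
      have b2 : √p ≤ (1 + p ^ 2) ^ (1 / 4 : ℝ) := by
        have : √p = (p ^ 2) ^ (1 / 4 : ℝ) := by
          rw [Real.sqrt_eq_rpow, ← Real.rpow_natCast, ← Real.rpow_mul hp.le]; norm_num
        rw [this]
        gcongr
        linarith
      calc p * |besselJ0 (p * r)| ≤ p * (3 / √(p * r)) := by gcongr
        _ = 3 / √r * √p := by
          rw [Real.sqrt_mul hp.le]
          have := Real.mul_self_sqrt hp.le
          have h3 : 0 < √p := Real.sqrt_pos.mpr hp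
          have h4 : 0 < √r := Real.sqrt_pos.mpr hr
          field_simp
          nlinarith
        _ ≤ _ := by gcongr
    have hP : (0 : ℝ) < 1 + p ^ 2 := by positivity
    rw [Real.norm_eq_abs, abs_div, abs_mul, abs_of_pos hp,
      abs_of_pos (show 0 < (p ^ 2 + k ^ 2) ^ (j + 1) by positivity), Real.norm_eq_abs, sq_abs]
    calc _ ≤ 3 / √r * (1 + p ^ 2) ^ (1 / 4 : ℝ) / ((k ^ 2) ^ j * c * (1 + p ^ 2)) := by gcongr
      _ = _ := by
        have : (1 + p ^ 2) ^ (-(3 / 2 : ℝ) / 2) = (1 + p ^ 2) ^ (1 / 4 : ℝ) / (1 + p ^ 2) := by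
          rw [← Real.rpow_sub_one hP.ne']; norm_num
        rw [this]
        field_simp

lemma prod_integrable (j : ℕ) (r k : ℝ) (hr : 0 < r) (hk : 0 < k) :
    Integrable (Function.uncurry fun p s : ℝ =>
      p * besselJ0 (p * r) * (s ^ j * Real.exp (-((p ^ 2 + k ^ 2) * s))))
      ((volume.restrict (Ioi 0)).prod (volume.restrict (Ioi 0))) := by
  have hJ := besselJ0_continuous
  rw [integrable_prod_iff]
  · constructor
    · refine Filter.Eventually.of_forall fun p => ?_
      exact (gamma_nat_integrable j (p ^ 2 + k ^ 2) (by positivity)).const_mul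
        (p * besselJ0 (p * r))
    · refine ((J_integrable j r k hr hk).norm.const_mul (Nat.factorial j : ℝ)).congr ?_
      refine Filter.Eventually.of_forall fun p => ?_
      have hpos : 0 < p ^ 2 + k ^ 2 := by positivity
      simp only [Function.uncurry_apply_pair, norm_mul (p * besselJ0 (p * r))]
      rw [integral_const_mul]
      have : ∫ s in Ioi (0 : ℝ), ‖s ^ j * Real.exp (-((p ^ 2 + k ^ 2) * s))‖ =
          ∫ s in Ioi (0 : ℝ), s ^ j * Real.exp (-((p ^ 2 + k ^ 2) * s)) := by
        refine setIntegral_congr_fun measurableSet_Ioi fun s hs => ?_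
        have hs : 0 < s := hs
        exact Real.norm_of_nonneg (by positivity)
      rw [this, gamma_nat j _ hpos, norm_div,
        Real.norm_of_nonneg (show 0 ≤ (p ^ 2 + k ^ 2) ^ (j + 1) by positivity)]
      ring
  · refine Continuous.aestronglyMeasurable ?_
    unfold Function.uncurry
    fun_prop

lemma inner_p (j : ℕ) (r k s : ℝ) (hs : 0 < s) :
    ∫ p in Ioi (0 : ℝ), p * besselJ0 (p * r) * (s ^ j * Real.exp (-((p ^ 2 + k ^ 2) * s))) =
      s ^ j * Real.exp (-(k ^ 2 * s)) * (1 / (2 * s) * Real.exp (-(r ^ 2 / (4 * s)))) := by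
  rw [← weber s r hs, ← integral_const_mul]
  congr 1
  ext p
  rw [show -((p ^ 2 + k ^ 2) * s) = -(k ^ 2 * s) + -s * p ^ 2 by ring, Real.exp_add]
  ring

lemma subst_exp (c : ℝ) (hc : 0 < c) (g : ℝ → ℝ) (hg : IntegrableOn g (Ioi 0)) :
    Integrable (fun t : ℝ => c * Real.exp t * g (c * Real.exp t)) ∧
    ∫ s in Ioi (0 : ℝ), g s = ∫ t : ℝ, c * Real.exp t * g (c * Real.exp t) := by
  have him : (fun t : ℝ => c * Real.exp t) '' univ = Ioi 0 := by
    ext s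
    simp only [image_univ, mem_range, mem_Ioi]
    constructor
    · rintro ⟨t, rfl⟩; positivity
    · intro hs
      exact ⟨Real.log (s / c), by rw [Real.exp_log (by positivity)]; field_simp⟩
  have hd : ∀ t ∈ (univ : Set ℝ), HasDerivWithinAt (fun t : ℝ => c * Real.exp t)
      (c * Real.exp t) univ t := fun t _ => ((Real.hasDerivAt_exp t).const_mul c).hasDerivWithinAt
  have hinj : InjOn (fun t : ℝ => c * Real.exp t) univ := by
    intro a _ b _ hab
    exact Real.exp_injective (mul_left_cancel₀ hc.ne' hab)
  have habs : ∀ t : ℝ, |c * Real.exp t| = c * Real.exp t := fun t => abs_of_pos (by positivity)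
  constructor
  · have := (integrableOn_image_iff_integrableOn_abs_deriv_smul MeasurableSet.univ hd hinj g).1
      (by rw [him]; exact hg)
    simpa only [habs, smul_eq_mul, integrableOn_univ] using this
  · have := integral_image_eq_integral_abs_deriv_smul MeasurableSet.univ hd hinj g
    simpa only [him, habs, smul_eq_mul, setIntegral_univ] using this

lemma main_j (r k : ℝ) (hr : 0 < r) (hk : 0 < k) (j : ℕ) :
    (2 * k ^ 2) ^ j *
        ∫ p in Set.Ioi (0 : ℝ), p * besselJ0 (p * r) / (p ^ 2 + k ^ 2) ^ (j + 1) =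
      ((k * r) ^ j / (Nat.factorial j : ℝ)) * besselK j (k * r) := by
  have hP := prod_integrable j r k hr hk
  have hswap := integral_integral_swap hP
  have hleft : ∫ p in Ioi (0 : ℝ), ∫ s in Ioi (0 : ℝ),
      p * besselJ0 (p * r) * (s ^ j * Real.exp (-((p ^ 2 + k ^ 2) * s))) =
      (Nat.factorial j : ℝ) *
        ∫ p in Ioi (0 : ℝ), p * besselJ0 (p * r) / (p ^ 2 + k ^ 2) ^ (j + 1) := by
    rw [← integral_const_mul]
    congr 1
    ext p
    rw [integral_const_mul, gamma_nat j _ (by positivity)]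
    ring
  set g : ℝ → ℝ := fun s => s ^ j * Real.exp (-(k ^ 2 * s)) *
    (1 / (2 * s) * Real.exp (-(r ^ 2 / (4 * s)))) with hg
  have hgi : IntegrableOn g (Ioi 0) := by
    refine hP.integral_prod_right.congr ?_
    refine (ae_restrict_mem measurableSet_Ioi).mono fun s hs => ?_
    exact inner_p j r k s hs
  have hright : ∫ s in Ioi (0 : ℝ), ∫ p in Ioi (0 : ℝ),
      p * besselJ0 (p * r) * (s ^ j * Real.exp (-((p ^ 2 + k ^ 2) * s))) =
      ∫ s in Ioi (0 : ℝ), g s :=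
    setIntegral_congr_fun measurableSet_Ioi fun s hs => inner_p j r k s hs
  obtain ⟨hti, hte⟩ := subst_exp (r / (2 * k)) (by positivity) g hgi
  set h : ℝ → ℝ := fun t => Real.exp (-(k * r * Real.cosh t)) * Real.exp (j * t) with hh
  have hform : ∀ t : ℝ, r / (2 * k) * Real.exp t * g (r / (2 * k) * Real.exp t) =
      (r / (2 * k)) ^ j / 2 * h t := by
    intro t
    have e1 : Real.exp (j * t) = Real.exp t ^ j := by rw [Real.exp_nat_mul]
    have e2 : -(k * r * Real.cosh t) = -(k ^ 2 * (r / (2 * k) * Real.exp t)) +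
        -(r ^ 2 / (4 * (r / (2 * k) * Real.exp t))) := by
      rw [Real.cosh_eq, Real.exp_neg]
      have := Real.exp_pos t
      field_simp
      ring
    simp only [hg, hh]
    rw [e1, e2, Real.exp_add, mul_pow]
    generalize Real.exp (-(k ^ 2 * (r / (2 * k) * Real.exp t))) = A
    generalize Real.exp (-(r ^ 2 / (4 * (r / (2 * k) * Real.exp t)))) = B
    have := Real.exp_pos t
    field_simp
  simp only [hform] at hti hte
  have hcpos : 0 < (r / (2 * k)) ^ j / 2 := by positivity
  have hhi : Integrable h := by
    refine (hti.const_mul ((r / (2 * k)) ^ j / 2)⁻¹).congr ?_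
    refine Filter.Eventually.of_forall fun t => ?_
    exact inv_mul_cancel_left₀ hcpos.ne' _
  have hK : ∫ t, h t = 2 * besselK j (k * r) := by
    rw [← intervalIntegral.integral_Iic_add_Ioi (b := 0) hhi.integrableOn hhi.integrableOn]
    have hn := integral_comp_neg_Ioi (0 : ℝ) h
    rw [neg_zero] at hn
    rw [← hn, ← integral_add hhi.comp_neg.integrableOn hhi.integrableOn]
    unfold besselK
    rw [← integral_const_mul]
    congr 1
    ext t
    simp only [hh]
    rw [Real.cosh_neg, Real.cosh_eq (j * t), mul_neg]
    ring
  rw [integral_const_mul, hK] at hte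
  rw [hleft, hright, hte] at hswap
  have hfac : (0 : ℝ) < Nat.factorial j := by positivity
  have hI : ∫ p in Set.Ioi (0 : ℝ), p * besselJ0 (p * r) / (p ^ 2 + k ^ 2) ^ (j + 1) =
      (r / (2 * k)) ^ j * besselK j (k * r) / Nat.factorial j := by
    rw [eq_div_iff hfac.ne']; linarith
  rw [hI]
  have : (k * r) ^ j = (2 * k ^ 2) ^ j * (r / (2 * k)) ^ j := by
    rw [← mul_pow]; congr 1; field_simp
  rw [this]
  ring

/-- For every integer `j ≥ 0` and all reals `r > 0`, `k > 0`,
`(2k²)^j ∫_0^∞ p J₀(pr)/(p² + k²)^{j+1} dp = ((kr)^j / j!) K_j(kr)`.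
Consequently, for every integer `n ≥ 1`, the 2D inverse Fourier transform of
`ĝ_n` satisfies `h_n(r,k) = (1/(2π)) ∑_{j=0}^{n-1} ∫_0^∞ (2k²)^j/(p² + k²)^{j+1}
J₀(pr) p dp = (1/(2π)) ∑_{j=0}^{n-1} ((kr)^j / j!) K_j(kr)`. -/
theorem helmholtzH2_inverse_fourier (r k : ℝ) (hr : 0 < r) (hk : 0 < k) :
    (∀ j : ℕ,
        (2 * k ^ 2) ^ j *
            ∫ p in Set.Ioi (0 : ℝ), p * besselJ0 (p * r) / (p ^ 2 + k ^ 2) ^ (j + 1) =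
          ((k * r) ^ j / (Nat.factorial j : ℝ)) * besselK j (k * r)) ∧
      ∀ n : ℕ, 1 ≤ n →
        (1 / (2 * Real.pi)) * ∑ j ∈ Finset.range n,
            ∫ p in Set.Ioi (0 : ℝ),
              (2 * k ^ 2) ^ j / (p ^ 2 + k ^ 2) ^ (j + 1) * besselJ0 (p * r) * p =
          (1 / (2 * Real.pi)) * ∑ j ∈ Finset.range n,
            ((k * r) ^ j / (Nat.factorial j : ℝ)) * besselK j (k * r) := by
  refine ⟨main_j r k hr hk, fun n _ => ?_⟩
  congr 1
  refine Finset.sum_congr rfl fun j _ => ?_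
  rw [← main_j r k hr hk j, ← MeasureTheory.integral_const_mul]
  congr 1
  ext p
  ring
end

section
/- For every integer n ≥ 1 and all reals r > 0, k > 0, ∫_{−∞}^{∞} e^{−r² e^t/4} · (1/(4π)) e^{−k² e^{−t}} (Σ_{j=0}^{n−1} (2k² e^{−t})^j / j!) dt = (1/(2π)) Σ_{j=0}^{n−1} ((kr)^j / j!) K_j(kr); i.e., the 2D non-oscillatory component h_n(r,k) admits the integral representation h_n(r,k) = ∫_{−∞}^{∞} e^{−r² e^t/4} ω_n(k,t) dt with ω_n(k,t) = (1/(4π)) e^{−k² e^{−t}} Σ_{j=0}^{n−1} (2k² e^{−t})^j / j!. -/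
/-- The weight `ω_n(k,t) = (1/(4π)) e^{-k² e^{-t}} ∑_{j=0}^{n-1} (2k² e^{-t})^j / j!`. -/
noncomputable def helmholtzW2 (n : ℕ) (k t : ℝ) : ℝ :=
  (1 / (4 * Real.pi)) * Real.exp (-(k ^ 2 * Real.exp (-t))) *
    ∑ j ∈ Finset.range n, (2 * k ^ 2 * Real.exp (-t)) ^ j / (Nat.factorial j : ℝ)

open MeasureTheory in
theorem aux_integrable (j : ℕ) (x : ℝ) (hx : 0 < x) :
    Integrable (fun s : ℝ => Real.exp (-(x * Real.cosh s)) * Real.exp (-((j : ℝ) * s))) := by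
  have hq := (integrable_cexp_quadratic (b := ((x / 4 : ℝ) : ℂ))
    (by rw [Complex.ofReal_re]; positivity) (((-(j : ℝ)) : ℝ) : ℂ) 0).norm
  refine hq.mono' ?_ (Filter.Eventually.of_forall fun s => ?_)
  · have hc : Continuous fun s : ℝ =>
        Real.exp (-(x * Real.cosh s)) * Real.exp (-((j : ℝ) * s)) := by
      have := Real.continuous_cosh
      fun_prop
    exact hc.aestronglyMeasurable
  · have hcosh : s ^ 2 / 4 ≤ Real.cosh s := by
      have h1 := Real.quadratic_le_exp_of_nonneg (abs_nonneg s)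
      have h2 := Real.exp_pos (-|s|)
      have h3 := abs_nonneg s
      rw [← Real.cosh_abs, Real.cosh_eq]
      rw [sq_abs] at h1
      linarith
    have he : (-((x / 4 : ℝ) : ℂ) * (s : ℂ) ^ 2 + (((-(j : ℝ)) : ℝ) : ℂ) * (s : ℂ) + 0)
        = ((-(x / 4) * s ^ 2 + -(j : ℝ) * s : ℝ) : ℂ) := by
      push_cast
      ring
    rw [he, Complex.norm_exp, Complex.ofReal_re, ← Real.exp_add, Real.norm_eq_abs, Real.abs_exp]
    apply Real.exp_le_exp.mpr
    nlinarith

open MeasureTheory in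
theorem aux_integral (j : ℕ) (x : ℝ) (hx : 0 < x) :
    ∫ s : ℝ, Real.exp (-(x * Real.cosh s)) * Real.exp (-((j : ℝ) * s)) = 2 * besselK j x := by
  have hI := aux_integrable j x hx
  have hneg := integral_neg_eq_self
    (fun s : ℝ => Real.exp (-(x * Real.cosh s)) * Real.exp (-((j : ℝ) * s))) volume
  have habs := integral_comp_abs
    (f := fun s : ℝ => Real.exp (-(x * Real.cosh s)) * Real.cosh ((j : ℝ) * s))
  have hadd := integral_add hI hI.comp_neg
  have heq : ∀ s : ℝ, Real.exp (-(x * Real.cosh s)) * Real.exp (-((j : ℝ) * s)) +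
      Real.exp (-(x * Real.cosh (-s))) * Real.exp (-((j : ℝ) * -s)) =
      2 * (Real.exp (-(x * Real.cosh |s|)) * Real.cosh ((j : ℝ) * |s|)) := by
    intro s
    have h1 : Real.cosh ((j : ℝ) * |s|) = Real.cosh ((j : ℝ) * s) := by
      rw [← Real.cosh_abs ((j : ℝ) * s), abs_mul, Nat.abs_cast]
    rw [h1, Real.cosh_abs, Real.cosh_neg, Real.cosh_eq ((j : ℝ) * s),
      show -((j : ℝ) * -s) = (j : ℝ) * s by ring]
    ring
  simp only [heq] at hadd
  rw [integral_const_mul, habs, hneg] at hadd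
  unfold besselK
  linarith

/-- For every integer `n ≥ 1` and all reals `r > 0`, `k > 0`,
the 2D non-oscillatory component `h_n(r,k) = (1/(2π)) ∑_{j=0}^{n-1} ((kr)^j/j!) K_j(kr)`
admits the Gaussian integral representation
`h_n(r,k) = ∫_{-∞}^{∞} e^{-r² e^t/4} ω_n(k,t) dt`. -/
theorem helmholtzH2_gaussian_representation (n : ℕ) (hn : 1 ≤ n) (r k : ℝ)
    (hr : 0 < r) (hk : 0 < k) :
    ∫ t : ℝ, Real.exp (-(r ^ 2 * Real.exp t / 4)) * helmholtzW2 n k t =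
      (1 / (2 * Real.pi)) * ∑ j ∈ Finset.range n,
        ((k * r) ^ j / (Nat.factorial j : ℝ)) * besselK j (k * r) := by
  have hx : 0 < k * r := mul_pos hk hr
  rw [← MeasureTheory.integral_add_right_eq_self _ (Real.log (2 * k / r))]
  have hpt : ∀ s : ℝ, Real.exp (-(r ^ 2 * Real.exp (s + Real.log (2 * k / r)) / 4)) *
      helmholtzW2 n k (s + Real.log (2 * k / r)) =
      ∑ j ∈ Finset.range n, (1 / (4 * Real.pi) * ((k * r) ^ j / (Nat.factorial j : ℝ))) *
        (Real.exp (-(k * r * Real.cosh s)) * Real.exp (-((j : ℝ) * s))) := by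
    intro s
    have hc : 0 < 2 * k / r := by positivity
    have h1 : r ^ 2 * Real.exp (s + Real.log (2 * k / r)) / 4 = k * r * Real.exp s / 2 := by
      rw [Real.exp_add, Real.exp_log hc]
      field_simp
      ring
    have h2 : k ^ 2 * Real.exp (-(s + Real.log (2 * k / r))) = k * r * Real.exp (-s) / 2 := by
      rw [neg_add, Real.exp_add, Real.exp_neg (Real.log _), Real.exp_log hc]
      field_simp
    unfold helmholtzW2
    rw [h1, mul_assoc 2, h2, Finset.mul_sum, Finset.mul_sum]
    refine Finset.sum_congr rfl fun j _ => ?_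
    have h3 : Real.exp (-(k * r * Real.cosh s)) =
        Real.exp (-(k * r * Real.exp s / 2)) * Real.exp (-(k * r * Real.exp (-s) / 2)) := by
      rw [← Real.exp_add, Real.cosh_eq]
      congr 1
      ring
    have h4 : Real.exp (-((j : ℝ) * s)) = Real.exp (-s) ^ j := by
      rw [← Real.exp_nat_mul]
      congr 1
      ring
    rw [h3, h4, show 2 * (k * r * Real.exp (-s) / 2) = (k * r) * Real.exp (-s) by ring, mul_pow]
    ring
  simp only [hpt]
  rw [MeasureTheory.integral_finsetSum _ fun j _ => (aux_integrable j _ hx).const_mul _,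
    Finset.mul_sum]
  refine Finset.sum_congr rfl fun j _ => ?_
  rw [MeasureTheory.integral_const_mul, aux_integral j _ hx]
  field_simp
  ring
end
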